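/- Let Γ be a 3-edge connected metric graph with canonical model (G₀, l₀), |V(G₀)| > 3, and let D ∈ W¹₃(Γ). If D_x and D_y are two consecutive admissible representatives of D, then there are exactly three distinct edges of the refinement G_D having one endpoint in Supp(D_x) and the other in Supp(D_y); these three edges form a 3-edge cut of G_D and all have the same length in (G_D, l_D). Moreover, for each point z ∈ Supp(D_x), the number of these cut edges incident to z equals the multiplicity D_x(z). -/

import Mathlib

open scoped Classical

/-!
Combinatorial models of metric graphs: a finite (multi-)graph together with a
positive length for each edge.  A metric graph is determined by such a model;
its canonical model is the (unique) model with all valences at least `3`.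
-/

structure MetricGraphModel : Type 1 where
  V : Type
  E : Type
  fV : Fintype V
  fE : Fintype E
  dV : DecidableEq V
  dE : DecidableEq E
  src : E → V
  tgt : E → V
  len : E → ℝ
  len_pos : ∀ e, 0 < len e

attribute [instance] MetricGraphModel.fV MetricGraphModel.fE
attribute [instance] MetricGraphModel.dV MetricGraphModel.dE

namespace MetricGraphModel

/-- An edge is incident to a vertex. -/
def Incident (Γ : MetricGraphModel) (e : Γ.E) (v : Γ.V) : Prop :=
  Γ.src e = v ∨ Γ.tgt e = v

/-- Incidence multiplicity (a loop counts twice). -/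
def incid (Γ : MetricGraphModel) (e : Γ.E) (v : Γ.V) : ℕ :=
  (if Γ.src e = v then 1 else 0) + (if Γ.tgt e = v then 1 else 0)

/-- The valence of a vertex. -/
def valence (Γ : MetricGraphModel) (v : Γ.V) : ℕ := ∑ e : Γ.E, Γ.incid e v

def dSrc (Γ : MetricGraphModel) (x : Γ.E × Bool) : Γ.V :=
  if x.2 then Γ.src x.1 else Γ.tgt x.1

def dTgt (Γ : MetricGraphModel) (x : Γ.E × Bool) : Γ.V :=
  if x.2 then Γ.tgt x.1 else Γ.src x.1

/-- Walks, given as lists of oriented edges. -/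
def IsWalk (Γ : MetricGraphModel) : List (Γ.E × Bool) → Γ.V → Γ.V → Prop
  | [], u, v => u = v
  | x :: xs, u, v => Γ.dSrc x = u ∧ IsWalk Γ xs (Γ.dTgt x) v

def Connected (Γ : MetricGraphModel) : Prop :=
  Nonempty Γ.V ∧ ∀ u v : Γ.V, ∃ L, IsWalk Γ L u v

/-- Removing any set of at most `2` edges leaves the graph connected. -/
def ThreeEdgeConnected (Γ : MetricGraphModel) : Prop :=
  ∀ S : Finset Γ.E, S.card ≤ 2 → ∀ u v : Γ.V,
    ∃ L, IsWalk Γ L u v ∧ ∀ x ∈ L, x.1 ∉ S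

def Loopless (Γ : MetricGraphModel) : Prop := ∀ e : Γ.E, Γ.src e ≠ Γ.tgt e

/-- A canonical model: connected, with all valences at least `3`. -/
def IsCanonical (Γ : MetricGraphModel) : Prop :=
  Γ.Connected ∧ ∀ v : Γ.V, 3 ≤ Γ.valence v

/-- A (model of a) metric tree. -/
def IsTreeModel (Γ : MetricGraphModel) : Prop :=
  Γ.Connected ∧ Fintype.card Γ.E + 1 = Fintype.card Γ.V

/-- Points of the associated metric graph: vertices together with interior
points of edges (parametrised by their distance from the source). -/
abbrev Pt (Γ : MetricGraphModel) : Type :=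
  Γ.V ⊕ Σ e : Γ.E, {t : ℝ // 0 < t ∧ t < Γ.len e}

end MetricGraphModel

open MetricGraphModel

/-- The (canonical) loopless model: insert a vertex at the midpoint of every loop. -/
noncomputable def looplessModel (Γ : MetricGraphModel) : MetricGraphModel where
  V := Γ.V ⊕ {e : Γ.E // Γ.src e = Γ.tgt e}
  E := {e : Γ.E // Γ.src e ≠ Γ.tgt e} ⊕ ({e : Γ.E // Γ.src e = Γ.tgt e} × Bool)
  fV := inferInstance
  fE := inferInstance
  dV := inferInstance
  dE := inferInstance
  src := fun x => match x with
    | Sum.inl e => Sum.inl (Γ.src e.1)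
    | Sum.inr p => Sum.inl (Γ.src p.1.1)
  tgt := fun x => match x with
    | Sum.inl e => Sum.inl (Γ.tgt e.1)
    | Sum.inr p => Sum.inr p.1
  len := fun x => match x with
    | Sum.inl e => Γ.len e.1
    | Sum.inr p => Γ.len p.1.1 / 2
  len_pos := by
    rintro (e | p)
    · exact Γ.len_pos e.1
    · have h := Γ.len_pos p.1.1
      show 0 < Γ.len p.1.1 / 2
      linarith

/-- The metric subgraph obtained by removing all loops. -/
noncomputable def deloop (Γ : MetricGraphModel) : MetricGraphModel where
  V := Γ.V
  E := {e : Γ.E // Γ.src e ≠ Γ.tgt e}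
  fV := inferInstance
  fE := inferInstance
  dV := inferInstance
  dE := inferInstance
  src := fun e => Γ.src e.1
  tgt := fun e => Γ.tgt e.1
  len := fun e => Γ.len e.1
  len_pos := fun e => Γ.len_pos e.1

namespace MetricGraphModel

/-! ### Divisors and rational functions -/

abbrev Divisor (Γ : MetricGraphModel) : Type := Γ.Pt → ℤ

noncomputable def divDegree {Γ : MetricGraphModel} (D : Divisor Γ) : ℤ := finsum D

def DivEffective {Γ : MetricGraphModel} (D : Divisor Γ) : Prop := ∀ p, 0 ≤ D p

def DivFinSupp {Γ : MetricGraphModel} (D : Divisor Γ) : Prop :=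
  (Function.support D).Finite

noncomputable def unitDiv (Γ : MetricGraphModel) (p : Γ.Pt) : Divisor Γ :=
  fun q => if q = p then 1 else 0

/-- `f` is continuous piecewise linear with integer slopes on `[0, L]`. -/
def PLInt (f : ℝ → ℝ) (L : ℝ) : Prop :=
  ∃ n : ℕ, ∃ t : Fin (n + 1) → ℝ, t 0 = 0 ∧ t (Fin.last n) = L ∧ StrictMono t ∧
    ∀ i : Fin n, ∃ m : ℤ, ∀ s ∈ Set.Icc (t i.castSucc) (t i.succ),
      f s = f (t i.castSucc) + (m : ℝ) * (s - t i.castSucc)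

/-- The (integer) outgoing slope of `f` to the right of `t0`. -/
noncomputable def slopeR (f : ℝ → ℝ) (t0 : ℝ) : ℤ :=
  if h : ∃ m : ℤ, ∃ ε : ℝ, 0 < ε ∧ ∀ s ∈ Set.Icc t0 (t0 + ε),
      f s = f t0 + (m : ℝ) * (s - t0)
  then h.choose else 0

/-- The (integer) outgoing slope of `f` to the left of `t0`. -/
noncomputable def slopeL (f : ℝ → ℝ) (t0 : ℝ) : ℤ :=
  if h : ∃ m : ℤ, ∃ ε : ℝ, 0 < ε ∧ ∀ s ∈ Set.Icc (t0 - ε) t0,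
      f s = f t0 + (m : ℝ) * (t0 - s)
  then h.choose else 0

/-- A rational function: continuous, piecewise linear with integer slopes. -/
structure RationalFunction (Γ : MetricGraphModel) where
  vVal : Γ.V → ℝ
  eFun : Γ.E → ℝ → ℝ
  pl : ∀ e, PLInt (eFun e) (Γ.len e)
  srcVal : ∀ e, eFun e 0 = vVal (Γ.src e)
  tgtVal : ∀ e, eFun e (Γ.len e) = vVal (Γ.tgt e)

/-- The principal divisor of a rational function: the sum of the outgoing
slopes at every point. -/
noncomputable def ratDiv {Γ : MetricGraphModel} (f : RationalFunction Γ) : Divisor Γ :=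
  fun p => match p with
  | Sum.inl v => ∑ e : Γ.E,
      ((if Γ.src e = v then slopeR (f.eFun e) 0 else 0) +
       (if Γ.tgt e = v then slopeL (f.eFun e) (Γ.len e) else 0))
  | Sum.inr q => slopeR (f.eFun q.1) q.2.1 + slopeL (f.eFun q.1) q.2.1

/-- Evaluation of a rational function at a point of the metric graph. -/
def ratEval {Γ : MetricGraphModel} (f : RationalFunction Γ) : Γ.Pt → ℝ
  | Sum.inl v => f.vVal v
  | Sum.inr q => f.eFun q.1 q.2.1

/-- Linear equivalence of divisors. -/
def LinEquiv (Γ : MetricGraphModel) (D D' : Divisor Γ) : Prop :=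
  ∃ f : RationalFunction Γ, ∀ p, D p = D' p + ratDiv f p

/-- The Baker–Norine rank of `D` is at least `k`. -/
def RankGE (Γ : MetricGraphModel) (D : Divisor Γ) (k : ℕ) : Prop :=
  ∀ A : Divisor Γ, DivEffective A → DivFinSupp A → divDegree A = (k : ℤ) →
    ∃ B : Divisor Γ, DivEffective B ∧ DivFinSupp B ∧
      LinEquiv Γ (fun p => D p - A p) B

/-- `W¹₃(Γ) ≠ ∅`: some divisor of degree `3` has rank at least `1`. -/
def DivisoriallyTrigonal (Γ : MetricGraphModel) : Prop :=
  ∃ D : Divisor Γ, DivFinSupp D ∧ divDegree D = 3 ∧ RankGE Γ D 1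

end MetricGraphModel

/-! ### Harmonic morphisms of metric graphs -/

/-- An indexed morphism of metric graph models.  An edge is either mapped onto
an edge (with an integer stretching index `mu`) or contracted to a vertex. -/
structure MGMorphism (Γ Δ : MetricGraphModel) where
  vMap : Γ.V → Δ.V
  eMap : Γ.E → Δ.E ⊕ Δ.V
  mu : Γ.E → ℕ
  mu_zero : ∀ e, mu e = 0 ↔ ∃ v', eMap e = Sum.inr v'
  contract_ok : ∀ e v', eMap e = Sum.inr v' →
    vMap (Γ.src e) = v' ∧ vMap (Γ.tgt e) = v'
  edge_ok : ∀ e e', eMap e = Sum.inl e' →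
    ((vMap (Γ.src e) = Δ.src e' ∧ vMap (Γ.tgt e) = Δ.tgt e') ∨
     (vMap (Γ.src e) = Δ.tgt e' ∧ vMap (Γ.tgt e) = Δ.src e'))
  len_ok : ∀ e e', eMap e = Sum.inl e' → (mu e : ℝ) * Γ.len e = Δ.len e'

namespace MGMorphism

variable {Γ Δ : MetricGraphModel}

/-- The local sum `m_φ(v)` computed along a fixed edge `e'` at `φ(v)`. -/
noncomputable def locDeg (φ : MGMorphism Γ Δ) (v : Γ.V) (e' : Δ.E) : ℕ :=
  ∑ e : Γ.E, if φ.eMap e = Sum.inl e' then φ.mu e * Γ.incid e v else 0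

def Harmonic (φ : MGMorphism Γ Δ) : Prop :=
  ∀ (v : Γ.V) (e₁ e₂ : Δ.E),
    Δ.Incident e₁ (φ.vMap v) → Δ.Incident e₂ (φ.vMap v) →
      locDeg φ v e₁ = locDeg φ v e₂

def Nondegenerate (φ : MGMorphism Γ Δ) : Prop :=
  ∀ v : Γ.V, ∃ e' : Δ.E, Δ.Incident e' (φ.vMap v) ∧ 1 ≤ locDeg φ v e'

def HasDegree (φ : MGMorphism Γ Δ) (d : ℕ) : Prop :=
  ∀ e' : Δ.E, (∑ e : Γ.E, if φ.eMap e = Sum.inl e' then φ.mu e else 0) = d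

/-- The horizontal multiplicity `m_φ(v)` at a vertex. -/
noncomputable def mVal (φ : MGMorphism Γ Δ) (v : Γ.V) : ℕ :=
  (Finset.univ.filter fun e' : Δ.E => Δ.Incident e' (φ.vMap v)).sup (locDeg φ v)

end MGMorphism

/-! ### Isomorphisms, subdivisions and tropical modifications -/

def sameEndsMap (Γ Δ : MetricGraphModel) (f : Γ.V → Δ.V) (e : Γ.E) (e' : Δ.E) : Prop :=
  (f (Γ.src e) = Δ.src e' ∧ f (Γ.tgt e) = Δ.tgt e') ∨
  (f (Γ.src e) = Δ.tgt e' ∧ f (Γ.tgt e) = Δ.src e')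

structure MGMIso (Γ Δ : MetricGraphModel) where
  vEquiv : Γ.V ≃ Δ.V
  eEquiv : Γ.E ≃ Δ.E
  ends : ∀ e, sameEndsMap Γ Δ (fun v => vEquiv v) e (eEquiv e)
  len_eq : ∀ e, Δ.len (eEquiv e) = Γ.len e

/-- Deletion of a leaf (a valence-one vertex together with its edge). -/
def LeafDeletion (Δ Δ' : MetricGraphModel) : Prop :=
  ∃ (v₀ : Δ.V) (e₀ : Δ.E), Δ.valence v₀ = 1 ∧ Δ.Incident e₀ v₀ ∧
    ∃ (fv : Δ'.V ≃ {v : Δ.V // v ≠ v₀}) (fe : Δ'.E ≃ {e : Δ.E // e ≠ e₀}),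
      (∀ e : Δ'.E, sameEndsMap Δ' Δ (fun v => (fv v).1) e (fe e).1) ∧
      ∀ e : Δ'.E, Δ.len (fe e).1 = Δ'.len e

/-- Suppression of a valence-two vertex, merging its two edges and adding
their lengths. -/
def SeriesReduction (Δ Δ' : MetricGraphModel) : Prop :=
  ∃ (v₀ : Δ.V) (e₁ e₂ : Δ.E) (u₁ u₂ : Δ.V),
    e₁ ≠ e₂ ∧ Δ.valence v₀ = 2 ∧ u₁ ≠ v₀ ∧ u₂ ≠ v₀ ∧
    ({Δ.src e₁, Δ.tgt e₁} : Set Δ.V) = {v₀, u₁} ∧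
    ({Δ.src e₂, Δ.tgt e₂} : Set Δ.V) = {v₀, u₂} ∧
    ∃ (fv : Δ'.V ≃ {v : Δ.V // v ≠ v₀}) (ebar : Δ'.E)
      (fe : {e : Δ'.E // e ≠ ebar} ≃ {e : Δ.E // e ≠ e₁ ∧ e ≠ e₂}),
      Δ'.len ebar = Δ.len e₁ + Δ.len e₂ ∧
      ({(fv (Δ'.src ebar)).1, (fv (Δ'.tgt ebar)).1} : Set Δ.V) = {u₁, u₂} ∧
      (∀ e : {e : Δ'.E // e ≠ ebar},
        sameEndsMap Δ' Δ (fun v => (fv v).1) e.1 (fe e).1) ∧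
      ∀ e : {e : Δ'.E // e ≠ ebar}, Δ.len (fe e).1 = Δ'.len e.1

def ReductionStep (Δ Δ' : MetricGraphModel) : Prop :=
  LeafDeletion Δ Δ' ∨ SeriesReduction Δ Δ' ∨ Nonempty (MGMIso Δ Δ')

/-- `Δ` reduces to `Γ` by deleting leaves and suppressing valence-two
vertices.  When `Γ` is a canonical model, this says exactly that the metric
graph of `Δ` is a tropical modification of the metric graph of `Γ`. -/
def Reduces (Δ Γ : MetricGraphModel) : Prop :=
  Relation.ReflTransGen ReductionStep Δ Γ

def IsTropicalModificationOf (Δ Γ : MetricGraphModel) : Prop := Reduces Δ Γ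

def ModelStep (Δ Δ' : MetricGraphModel) : Prop :=
  SeriesReduction Δ Δ' ∨ Nonempty (MGMIso Δ Δ')

/-- `Δ` and `Γ` are models of the same metric graph (no trees added). -/
def SameMetricGraph (Δ Γ : MetricGraphModel) : Prop :=
  Relation.ReflTransGen ModelStep Δ Γ

/-- `Γ` is trigonal: a tropical modification of `Γ` admits a non-degenerate
harmonic morphism of degree `3` onto a metric tree. -/
def Trigonal (Γ : MetricGraphModel) : Prop :=
  ∃ Δ T : MetricGraphModel, IsTropicalModificationOf Δ Γ ∧ T.IsTreeModel ∧
    ∃ φ : MGMorphism Δ T,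
      MGMorphism.Harmonic φ ∧ MGMorphism.Nondegenerate φ ∧ MGMorphism.HasDegree φ 3

/-- `Γ` is strictly trigonal: `Γ` itself (i.e. some model of the same metric
graph) admits a non-degenerate harmonic morphism of degree `3` onto a metric
tree. -/
def StrictlyTrigonal (Γ : MetricGraphModel) : Prop :=
  ∃ Δ T : MetricGraphModel, SameMetricGraph Δ Γ ∧ T.IsTreeModel ∧
    ∃ φ : MGMorphism Δ T,
      MGMorphism.Harmonic φ ∧ MGMorphism.Nondegenerate φ ∧ MGMorphism.HasDegree φ 3

/-! ### Embeddings up to subdivision (for tropical modifications of morphisms) -/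

structure SubEmbed (G Δ : MetricGraphModel) where
  v : G.V → Δ.V
  inj : Function.Injective v
  path : G.E → List (Δ.E × Bool)
  ne : ∀ e, path e ≠ []
  walk : ∀ e, MetricGraphModel.IsWalk Δ (path e) (v (G.src e)) (v (G.tgt e))
  len_sum : ∀ e, ((path e).map fun x => Δ.len x.1).sum = G.len e

/-! ### Pullback of points along a harmonic morphism -/

/-- `φ` maps the point `p` of `Γ` to the point `t` of `Δ`. -/
def MapsToPt {Γ Δ : MetricGraphModel} (φ : MGMorphism Γ Δ) : Γ.Pt → Δ.Pt → Prop
  | Sum.inl v, Sum.inl t => φ.vMap v = t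
  | Sum.inl _, Sum.inr _ => False
  | Sum.inr q, Sum.inl t => φ.eMap q.1 = Sum.inr t
  | Sum.inr q, Sum.inr r =>
      φ.eMap q.1 = Sum.inl r.1 ∧
      ((φ.vMap (Γ.src q.1) = Δ.src r.1 ∧ (r.2.1 : ℝ) = (φ.mu q.1 : ℝ) * (q.2.1 : ℝ)) ∨
       (φ.vMap (Γ.src q.1) = Δ.tgt r.1 ∧
         (r.2.1 : ℝ) = Δ.len r.1 - (φ.mu q.1 : ℝ) * (q.2.1 : ℝ)))

/-- Horizontal multiplicity of a point. -/
noncomputable def hmult {Γ Δ : MetricGraphModel} (φ : MGMorphism Γ Δ) : Γ.Pt → ℕ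
  | Sum.inl v => MGMorphism.mVal φ v
  | Sum.inr q => φ.mu q.1

/-- The pullback divisor `φ*(t)` of a point `t`. -/
noncomputable def pullbackDiv {Γ Δ : MetricGraphModel} (φ : MGMorphism Γ Δ)
    (t : Δ.Pt) : MetricGraphModel.Divisor Γ :=
  fun p => if MapsToPt φ p t then (hmult φ p : ℤ) else 0

/-! ### Points on edges, admissible representatives, consecutive divisors -/

open MetricGraphModel

/-- `p` is an interior point of the edge `e`. -/
def interiorOf (Γ : MetricGraphModel) (e : Γ.E) (p : Γ.Pt) : Prop :=
  ∃ q : {t : ℝ // 0 < t ∧ t < Γ.len e}, p = Sum.inr ⟨e, q⟩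

def SameEdgeInterior (Γ : MetricGraphModel) (p q : Γ.Pt) : Prop :=
  ∃ e : Γ.E, interiorOf Γ e p ∧ interiorOf Γ e q

/-- `Dx` is the admissible representative of `D` with respect to the vertex
`x`: it is linearly equivalent to `D`, of the form `x + x₁ + x₂`, and `x₁, x₂`
do not both lie in the interior of one edge. -/
def AdmissibleRep (Γ : MetricGraphModel) (D : Divisor Γ) (x : Γ.V)
    (Dx : Divisor Γ) : Prop :=
  LinEquiv Γ D Dx ∧
  ∃ p q : Γ.Pt,
    Dx = (fun z => unitDiv Γ (Sum.inl x) z + unitDiv Γ p z + unitDiv Γ q z) ∧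
    ¬ SameEdgeInterior Γ p q

/-- `p` lies on the (closed) edge `e` at distance `s` from its source. -/
def LiesOn (Γ : MetricGraphModel) (e : Γ.E) (p : Γ.Pt) (s : ℝ) : Prop :=
  (p = Sum.inl (Γ.src e) ∧ s = 0) ∨ (p = Sum.inl (Γ.tgt e) ∧ s = Γ.len e) ∨
  (∃ h : 0 < s ∧ s < Γ.len e, p = Sum.inr ⟨e, ⟨s, h⟩⟩)

/-- Vertices of the refinement `G_D`: vertices of `G₀` together with all
support points of admissible representatives of `D`. -/
def SpecialPt (Γ : MetricGraphModel) (D : Divisor Γ) (p : Γ.Pt) : Prop :=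
  (∃ v : Γ.V, p = Sum.inl v) ∨
  ∃ (x : Γ.V) (Dx : Divisor Γ), AdmissibleRep Γ D x Dx ∧ Dx p ≠ 0

/-- An edge of the refinement `G_D` joining the supports of `Dx` and `Dy`:
a segment of an edge of `Γ` between a point of `Supp Dx` and a point of
`Supp Dy` containing no vertex of `G_D` in its interior. -/
def ConnSeg (Γ : MetricGraphModel) (D Dx Dy : Divisor Γ) (e : Γ.E) (s t : ℝ) : Prop :=
  s < t ∧ ∃ p q : Γ.Pt, LiesOn Γ e p s ∧ LiesOn Γ e q t ∧
    ((Dx p ≠ 0 ∧ Dy q ≠ 0) ∨ (Dy p ≠ 0 ∧ Dx q ≠ 0)) ∧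
    ∀ r, s < r → r < t → ∀ z, LiesOn Γ e z r → ¬ SpecialPt Γ D z

/-- Two admissible representatives are consecutive. -/
def Consecutive (Γ : MetricGraphModel) (D Dx Dy : Divisor Γ) : Prop :=
  Dx ≠ Dy ∧ ∃ e s t, ConnSeg Γ D Dx Dy e s t

/-- The open segment of `e` between parameters `s` and `t`, as a set of points. -/
def segSet (Γ : MetricGraphModel) (e : Γ.E) (s t : ℝ) : Set Γ.Pt :=
  {z | ∃ r, s < r ∧ r < t ∧ LiesOn Γ e z r}

/-- Two points can be joined inside one edge avoiding the removed set `R`. -/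
def AvoidAdj (Γ : MetricGraphModel) (R : Set Γ.Pt) (p q : Γ.Pt) : Prop :=
  ∃ (e : Γ.E) (s t : ℝ), s ≤ t ∧
    ((LiesOn Γ e p s ∧ LiesOn Γ e q t) ∨ (LiesOn Γ e q s ∧ LiesOn Γ e p t)) ∧
    ∀ r, s < r → r < t → ∀ z, LiesOn Γ e z r → z ∉ R

/-- The complement of `R` in the metric graph is connected. -/
def ComplementConnected (Γ : MetricGraphModel) (R : Set Γ.Pt) : Prop :=
  ∀ p q : Γ.Pt, p ∉ R → q ∉ R →
    Relation.ReflTransGen (fun a b => a ∉ R ∧ b ∉ R ∧ AvoidAdj Γ R a b) p q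

/-! ### Minimizing/maximizing sets of a rational function -/

def minSet {Γ : MetricGraphModel} (f : RationalFunction Γ) : Set Γ.Pt :=
  {p | ∀ q, ratEval f p ≤ ratEval f q}

def maxSet {Γ : MetricGraphModel} (f : RationalFunction Γ) : Set Γ.Pt :=
  {p | ∀ q, ratEval f q ≤ ratEval f p}

/-- `p` is a boundary point of `A`: it belongs to `A` and there are points of
the complement arbitrarily close to it along some edge. -/
def InBoundary (Γ : MetricGraphModel) (A : Set Γ.Pt) (p : Γ.Pt) : Prop :=
  p ∈ A ∧ ∃ (e : Γ.E) (s : ℝ), LiesOn Γ e p s ∧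
    ∀ ε : ℝ, 0 < ε → ∃ r z, |r - s| < ε ∧ LiesOn Γ e z r ∧ z ∉ A

/-- There is an edge leaving `A` at `p`, in the direction of `e` at parameter
`s` (increasing if `b = true`, decreasing if `b = false`). -/
def ExitsAt (Γ : MetricGraphModel) (A : Set Γ.Pt) (p : Γ.Pt) (e : Γ.E)
    (s : ℝ) (b : Bool) : Prop :=
  LiesOn Γ e p s ∧
  (b = true → ∃ ε : ℝ, 0 < ε ∧ s + ε ≤ Γ.len e ∧
    ∀ r, s < r → r < s + ε → ∀ z, LiesOn Γ e z r → z ∉ A) ∧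
  (b = false → ∃ ε : ℝ, 0 < ε ∧ 0 ≤ s - ε ∧
    ∀ r, s - ε < r → r < s → ∀ z, LiesOn Γ e z r → z ∉ A)

/-!
Let `f` carry `Dx` to `Dy`, so that the chips of `Dx` move uphill along `f`.  For a level `c`
strictly between two values of `f` at vertices, the chips crossing the level `c` bound the number of
edges leaving the set of vertices `v` with `f v < c` by `3`; by edge connectivity there are exactly
three of them, and the function rises with slope one along each.  Hence the chips of `Dx` and `Dy`
lie where `f` is minimal and maximal respectively.  If `f` took a third value at some vertex,
truncating `f` there would give an admissible representative of `D` with a chip in the interior of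
the segment of `G_D` joining `Dx` to `Dy`.  So `f` has exactly two values `m < M` at the vertices,
the three edges between the two classes of vertices carry the required segments, each of length
`M - m`, and the chips of `Dx` are precisely the starting points of those segments.
-/

section

open Filter Topology Set

namespace MetricGraphModel

section OutgoingSlopes

/-- Near `t`, on the side `A` (which is `Ioi t` or `Iio t`), `φ` is affine with slope `m` in the
direction pointing away from `t`. -/
def HasOutSlope (φ : ℝ → ℝ) (A : Set ℝ) (t : ℝ) (m : ℤ) : Prop :=
  ∀ᶠ s in 𝓝[A] t, φ s = φ t + m * |s - t|

variable {φ ψ : ℝ → ℝ} {A B : Set ℝ} {c d t : ℝ} {m n : ℤ}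

lemma HasOutSlope.unique [(𝓝[A] t).NeBot] (ht : t ∉ A) (hm : HasOutSlope φ A t m)
    (hn : HasOutSlope φ A t n) : m = n := by
  obtain ⟨s, hsm, hsn, hsA⟩ := (hm.and (hn.and self_mem_nhdsWithin)).exists
  have hpos : |s - t| ≠ 0 := abs_ne_zero.2 (sub_ne_zero.2 fun h => ht (h ▸ hsA))
  exact_mod_cast mul_right_cancel₀ hpos (add_left_cancel (hsm.symm.trans hsn))

lemma HasOutSlope.congr (h : HasOutSlope φ A t m) (ht : ψ t = φ t) (hψ : ψ =ᶠ[𝓝[A] t] φ) :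
    HasOutSlope ψ A t m := by
  filter_upwards [h, hψ] with s hs hψs
  rw [hψs, hs, ht]

lemma HasOutSlope.add (hφ : HasOutSlope φ A t m) (hψ : HasOutSlope ψ A t n) :
    HasOutSlope (fun s => φ s + ψ s) A t (m + n) := by
  filter_upwards [hφ, hψ] with s hφs hψs
  rw [hφs, hψs]
  push_cast
  ring

lemma HasOutSlope.neg (hφ : HasOutSlope φ A t m) : HasOutSlope (fun s => -φ s) A t (-m) := by
  filter_upwards [hφ] with s hφs
  rw [hφs]
  push_cast
  ring

lemma HasOutSlope.sub (hφ : HasOutSlope φ A t m) (hψ : HasOutSlope ψ A t n) :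
    HasOutSlope (fun s => φ s - ψ s) A t (m - n) := by
  simpa only [sub_eq_add_neg] using hφ.add hψ.neg

lemma hasOutSlope_const (c : ℝ) (A : Set ℝ) (t : ℝ) : HasOutSlope (fun _ => c) A t 0 :=
  Eventually.of_forall fun s => by simp

lemma HasOutSlope.comp_const_sub (hφ : HasOutSlope φ A (c - t) m)
    (hAB : MapsTo (fun r => c - r) B A) : HasOutSlope (fun r => φ (c - r)) B t m := by
  have hlim : Tendsto (fun r => c - r) (𝓝[B] t) (𝓝[A] (c - t)) :=
    (continuous_const.sub continuous_id).continuousWithinAt.tendsto_nhdsWithin hAB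
  filter_upwards [hlim.eventually hφ] with s hs
  rw [hs, show c - s - (c - t) = t - s by ring, abs_sub_comm]

lemma HasOutSlope.continuousWithinAt (hφ : HasOutSlope φ A t m) : ContinuousWithinAt φ A t := by
  have hlin : ContinuousWithinAt (fun s => φ t + m * |s - t|) A t :=
    Continuous.continuousWithinAt (by fun_prop)
  exact hlin.congr_of_eventuallyEq hφ (by simp)

lemma HasOutSlope.min_const_of_lt (hφ : HasOutSlope φ A t m) (hc : φ t < c) :
    HasOutSlope (fun s => min (φ s) c) A t m := by
  refine hφ.congr (min_eq_left hc.le) ?_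
  filter_upwards [hφ.continuousWithinAt.eventually (gt_mem_nhds hc)] with s hs
  exact min_eq_left hs.le

lemma HasOutSlope.min_const_of_gt (hφ : HasOutSlope φ A t m) (hc : c < φ t) :
    HasOutSlope (fun s => min (φ s) c) A t 0 := by
  refine (hasOutSlope_const c A t).congr (min_eq_right hc.le) ?_
  filter_upwards [hφ.continuousWithinAt.eventually (lt_mem_nhds hc)] with s hs
  exact min_eq_right hs.le

lemma HasOutSlope.min_const_of_eq (hφ : HasOutSlope φ A t m) (hc : φ t = c) :
    HasOutSlope (fun s => min (φ s) c) A t (min m 0) := by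
  filter_upwards [hφ] with s hs
  rcases le_total m 0 with hm | hm
  · have : (m : ℝ) * |s - t| ≤ 0 :=
      mul_nonpos_of_nonpos_of_nonneg (by exact_mod_cast hm) (abs_nonneg _)
    rw [hs, hc, min_self, min_eq_left hm, min_eq_left (by linarith)]
  · have : 0 ≤ (m : ℝ) * |s - t| := mul_nonneg (by exact_mod_cast hm) (abs_nonneg _)
    rw [hs, hc, min_self, min_eq_right hm, min_eq_right (by linarith), Int.cast_zero, zero_mul,
      add_zero]

lemma HasOutSlope.exists_min_const (hφ : HasOutSlope φ A t m) (c : ℝ) :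
    ∃ n, HasOutSlope (fun s => min (φ s) c) A t n := by
  rcases lt_trichotomy (φ t) c with h | h | h
  exacts [⟨_, hφ.min_const_of_lt h⟩, ⟨_, hφ.min_const_of_eq h⟩, ⟨_, hφ.min_const_of_gt h⟩]

lemma hasOutSlope_Ioi_iff :
    HasOutSlope φ (Ioi t) t m ↔
      ∃ ε : ℝ, 0 < ε ∧ ∀ s ∈ Icc t (t + ε), φ s = φ t + (m : ℝ) * (s - t) := by
  constructor
  · intro h
    obtain ⟨u, hu, hsub⟩ := mem_nhdsGT_iff_exists_Ioc_subset.1 h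
    refine ⟨u - t, sub_pos.2 hu, fun s hs => ?_⟩
    rcases hs.1.eq_or_lt with rfl | hts
    · simp
    · rw [hsub (⟨hts, by linarith [hs.2]⟩ : s ∈ Ioc t u), abs_of_pos (sub_pos.2 hts)]
  · rintro ⟨ε, hε, h⟩
    filter_upwards [Ioo_mem_nhdsGT (lt_add_of_pos_right t hε)] with s hs
    rw [h s ⟨hs.1.le, hs.2.le⟩, abs_of_pos (sub_pos.2 hs.1)]

lemma hasOutSlope_Iio_iff :
    HasOutSlope φ (Iio t) t m ↔
      ∃ ε : ℝ, 0 < ε ∧ ∀ s ∈ Icc (t - ε) t, φ s = φ t + (m : ℝ) * (t - s) := by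
  constructor
  · intro h
    obtain ⟨u, hu, hsub⟩ := mem_nhdsLT_iff_exists_Ico_subset.1 h
    refine ⟨t - u, sub_pos.2 hu, fun s hs => ?_⟩
    rcases hs.2.eq_or_lt with rfl | hst
    · simp
    · rw [hsub (⟨by linarith [hs.1], hst⟩ : s ∈ Ico u t), abs_of_neg (sub_neg.2 hst), neg_sub]
  · rintro ⟨ε, hε, h⟩
    filter_upwards [Ioo_mem_nhdsLT (sub_lt_self t hε)] with s hs
    rw [h s ⟨hs.1.le, hs.2.le⟩, abs_of_neg (sub_neg.2 hs.2), neg_sub]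

lemma HasOutSlope.slopeR_eq (h : HasOutSlope φ (Ioi t) t m) : slopeR φ t = m := by
  have hex : ∃ m : ℤ, ∃ ε : ℝ, 0 < ε ∧ ∀ s ∈ Icc t (t + ε), φ s = φ t + (m : ℝ) * (s - t) :=
    ⟨m, hasOutSlope_Ioi_iff.1 h⟩
  rw [slopeR, dif_pos hex]
  exact (hasOutSlope_Ioi_iff.2 hex.choose_spec).unique self_notMem_Ioi h

lemma HasOutSlope.slopeL_eq (h : HasOutSlope φ (Iio t) t m) : slopeL φ t = m := by
  have hex : ∃ m : ℤ, ∃ ε : ℝ, 0 < ε ∧ ∀ s ∈ Icc (t - ε) t, φ s = φ t + (m : ℝ) * (t - s) :=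
    ⟨m, hasOutSlope_Iio_iff.1 h⟩
  rw [slopeL, dif_pos hex]
  exact (hasOutSlope_Iio_iff.2 hex.choose_spec).unique self_notMem_Iio h

lemma hasOutSlope_Ioi_of_affineOn
    (h : ∀ s ∈ Icc c d, φ s = φ c + (m : ℝ) * (s - c)) (ht : t ∈ Ico c d) :
    HasOutSlope φ (Ioi t) t m := by
  filter_upwards [Ioo_mem_nhdsGT ht.2] with s hs
  rw [h s ⟨ht.1.trans hs.1.le, hs.2.le⟩, h t ⟨ht.1, ht.2.le⟩, abs_of_pos (sub_pos.2 hs.1)]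
  ring

lemma hasOutSlope_Iio_of_affineOn
    (h : ∀ s ∈ Icc c d, φ s = φ c + (m : ℝ) * (s - c)) (ht : t ∈ Ioc c d) :
    HasOutSlope φ (Iio t) t (-m) := by
  filter_upwards [Ioo_mem_nhdsLT ht.1] with s hs
  rw [h s ⟨hs.1.le, hs.2.le.trans ht.2⟩, h t ⟨ht.1.le, ht.2⟩, abs_of_neg (sub_neg.2 hs.2)]
  push_cast
  ring

lemma hasOutSlope_Ioi_linear (m : ℤ) (t : ℝ) :
    HasOutSlope (fun s => (m : ℝ) * s) (Ioi t) t m :=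
  hasOutSlope_Ioi_of_affineOn (d := t + 1) (fun s _ => by ring) ⟨le_rfl, by linarith⟩

lemma hasOutSlope_Iio_linear (m : ℤ) (t : ℝ) :
    HasOutSlope (fun s => (m : ℝ) * s) (Iio t) t (-m) :=
  hasOutSlope_Iio_of_affineOn (c := t - 1) (fun s _ => by ring) ⟨by linarith, le_rfl⟩

lemma hasOutSlope_Ioi_max (p t : ℝ) :
    HasOutSlope (fun s => max 0 (s - p)) (Ioi t) t (if p ≤ t then 1 else 0) := by
  split_ifs with h
  · filter_upwards [self_mem_nhdsWithin] with s (hs : t < s)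
    rw [max_eq_right (by linarith), max_eq_right (by linarith), abs_of_pos (sub_pos.2 hs)]
    push_cast
    ring
  · refine (hasOutSlope_const 0 _ t).congr (max_eq_left (by linarith)) ?_
    filter_upwards [Ioo_mem_nhdsGT (not_le.1 h)] with s hs
    exact max_eq_left (by linarith [hs.2])

lemma hasOutSlope_Iio_max (p t : ℝ) :
    HasOutSlope (fun s => max 0 (s - p)) (Iio t) t (-if p < t then 1 else 0) := by
  split_ifs with h
  · filter_upwards [Ioo_mem_nhdsLT h] with s hs
    rw [max_eq_right (by linarith [hs.1]), max_eq_right (by linarith),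
      abs_of_neg (sub_neg.2 hs.2)]
    push_cast
    ring
  · rw [neg_zero]
    refine (hasOutSlope_const 0 _ t).congr (max_eq_left (by linarith)) ?_
    filter_upwards [self_mem_nhdsWithin] with s (hs : s < t)
    exact max_eq_left (by linarith)

end OutgoingSlopes

section PiecewiseLinear

variable {φ ψ : ℝ → ℝ} {L T T' c : ℝ} {m : ℤ}

/-- One-sided integer slopes exist at every point of `[0, L]`. By compactness this is equivalent
to `PLInt φ L`, and unlike subdivisions it is stable under pointwise operations. -/
def IsLocallyPL (φ : ℝ → ℝ) (L : ℝ) : Prop :=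
  (∀ t ∈ Ico 0 L, ∃ m, HasOutSlope φ (Ioi t) t m) ∧ ∀ t ∈ Ioc 0 L, ∃ m, HasOutSlope φ (Iio t) t m

lemma IsLocallyPL.add (hφ : IsLocallyPL φ L) (hψ : IsLocallyPL ψ L) :
    IsLocallyPL (fun s => φ s + ψ s) L :=
  ⟨fun t ht => (hφ.1 t ht).elim fun _ h => (hψ.1 t ht).imp' _ fun _ => h.add,
    fun t ht => (hφ.2 t ht).elim fun _ h => (hψ.2 t ht).imp' _ fun _ => h.add⟩

lemma IsLocallyPL.neg (hφ : IsLocallyPL φ L) : IsLocallyPL (fun s => -φ s) L :=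
  ⟨fun t ht => (hφ.1 t ht).imp' _ fun _ => HasOutSlope.neg,
    fun t ht => (hφ.2 t ht).imp' _ fun _ => HasOutSlope.neg⟩

lemma IsLocallyPL.min_const (hφ : IsLocallyPL φ L) (c : ℝ) :
    IsLocallyPL (fun s => min (φ s) c) L :=
  ⟨fun t ht => (hφ.1 t ht).elim fun _ h => h.exists_min_const c,
    fun t ht => (hφ.2 t ht).elim fun _ h => h.exists_min_const c⟩

lemma IsLocallyPL.continuousOn (hφ : IsLocallyPL φ L) : ContinuousOn φ (Icc 0 L) := by
  intro t ht
  have hleft : ContinuousWithinAt φ (Ico 0 t) t := by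
    rcases ht.1.eq_or_lt with rfl | h0
    · simp [ContinuousWithinAt]
    · obtain ⟨m, hm⟩ := hφ.2 t ⟨h0, ht.2⟩
      exact hm.continuousWithinAt.mono fun s hs => hs.2
  have hright : ContinuousWithinAt φ (Ioc t L) t := by
    rcases ht.2.eq_or_lt with rfl | hL
    · simp [ContinuousWithinAt]
    · obtain ⟨m, hm⟩ := hφ.1 t ⟨ht.1, hL⟩
      exact hm.continuousWithinAt.mono fun s hs => hs.1
  refine (hleft.union (continuousWithinAt_singleton.union hright)).mono fun s hs => ?_
  rcases lt_trichotomy s t with h | h | h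
  exacts [.inl ⟨hs.1, h⟩, .inr (.inl h), .inr (.inr ⟨h, hs.2⟩)]

lemma plInt_zero (φ : ℝ → ℝ) : PLInt φ 0 :=
  ⟨0, fun _ => 0, rfl, rfl, fun i j h => absurd h (by omega), fun i => i.elim0⟩

lemma PLInt.extend (h : PLInt φ T) (hT : T < T')
    (hm : ∀ s ∈ Icc T T', φ s = φ T + (m : ℝ) * (s - T)) : PLInt φ T' := by
  obtain ⟨n, t, h0, hlast, hmono, haff⟩ := h
  refine ⟨n + 1, Fin.snoc t T', ?_, by simp, ?_, ?_⟩
  · rw [← Fin.castSucc_zero, Fin.snoc_castSucc, h0]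
  · refine Fin.strictMono_iff_lt_succ.2 (Fin.lastCases ?_ fun i => ?_)
    · simpa [hlast] using hT
    · rw [← Fin.castSucc_succ, Fin.snoc_castSucc, Fin.snoc_castSucc]
      exact hmono i.castSucc_lt_succ
  · refine Fin.lastCases ⟨m, ?_⟩ fun i => ?_
    · simpa [hlast] using hm
    · rw [Fin.succ_castSucc, Fin.snoc_castSucc, Fin.snoc_castSucc]
      exact haff i

lemma IsLocallyPL.plInt (hL : 0 ≤ L) (hφ : IsLocallyPL φ L) : PLInt φ L := by
  set A := {T ∈ Icc 0 L | PLInt φ T}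
  have h0A : (0 : ℝ) ∈ A := ⟨⟨le_rfl, hL⟩, plInt_zero φ⟩
  have hbdd : BddAbove A := ⟨L, fun T hT => hT.1.2⟩
  have hc0 : 0 ≤ sSup A := le_csSup hbdd h0A
  have hcL : sSup A ≤ L := csSup_le ⟨0, h0A⟩ fun T hT => hT.1.2
  have hcA : PLInt φ (sSup A) := by
    rcases hc0.eq_or_lt with h | hpos
    · exact h ▸ plInt_zero φ
    obtain ⟨m, hm⟩ := hφ.2 _ ⟨hpos, hcL⟩
    obtain ⟨ε, hε, haff⟩ := hasOutSlope_Iio_iff.1 hm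
    obtain ⟨T, hTA, hT⟩ := exists_lt_of_lt_csSup ⟨0, h0A⟩ (sub_lt_self (sSup A) hε)
    rcases (le_csSup hbdd hTA).eq_or_lt with h | hlt
    · exact h ▸ hTA.2
    · refine hTA.2.extend (m := -m) hlt fun s hs => ?_
      rw [haff s ⟨hT.le.trans hs.1, hs.2⟩, haff T ⟨hT.le, hlt.le⟩]
      push_cast
      ring
  rcases hcL.eq_or_lt with h | hlt
  · exact h ▸ hcA
  obtain ⟨m, hm⟩ := hφ.1 _ ⟨hc0, hlt⟩
  obtain ⟨ε, hε, haff⟩ := hasOutSlope_Ioi_iff.1 hm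
  have hTL : sSup A < min (sSup A + ε) L := lt_min (lt_add_of_pos_right _ hε) hlt
  have hmem : min (sSup A + ε) L ∈ A :=
    ⟨⟨hc0.trans hTL.le, min_le_right _ _⟩,
      hcA.extend hTL fun s hs => haff s ⟨hs.1, hs.2.trans (min_le_left _ _)⟩⟩
  exact absurd (le_csSup hbdd hmem) hTL.not_ge

lemma PLInt.isLocallyPL (h : PLInt φ L) : IsLocallyPL φ L := by
  obtain ⟨n, t, h0, hlast, -, haff⟩ := h
  suffices ∀ i, IsLocallyPL φ (t i) from hlast ▸ this (Fin.last n)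
  refine Fin.induction ?_ fun i ih => ?_
  · rw [h0]
    exact ⟨fun s hs => absurd hs (by simp), fun s hs => absurd hs (by simp)⟩
  obtain ⟨m, hm⟩ := haff i
  refine ⟨fun s hs => ?_, fun s hs => ?_⟩
  · rcases lt_or_ge s (t i.castSucc) with h | h
    exacts [ih.1 s ⟨hs.1, h⟩, ⟨m, hasOutSlope_Ioi_of_affineOn hm ⟨h, hs.2⟩⟩]
  · rcases le_or_gt s (t i.castSucc) with h | h
    exacts [ih.2 s ⟨hs.1, h⟩, ⟨-m, hasOutSlope_Iio_of_affineOn hm ⟨h, hs.2⟩⟩]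

lemma PLInt.eq_linear_of_slopes_cancel (h : PLInt φ L)
    (hcancel : ∀ t ∈ Ioo 0 L, slopeR φ t + slopeL φ t = 0) :
    ∀ r ∈ Icc 0 L, φ r = φ 0 + slopeR φ 0 * r := by
  obtain ⟨n, t, h0, hlast, hmono, haff⟩ := h
  suffices ∀ i, ∀ r ∈ Icc 0 (t i), φ r = φ 0 + slopeR φ 0 * r from hlast ▸ this (Fin.last n)
  refine Fin.induction (fun r hr => ?_) fun i ih r hr => ?_
  · rw [h0, Icc_self, mem_singleton_iff] at hr
    simp [hr]
  rcases le_total r (t i.castSucc) with hri | hri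
  · exact ih r ⟨hr.1, hri⟩
  obtain ⟨m, hm⟩ := haff i
  have hlt : t i.castSucc < t i.succ := hmono i.castSucc_lt_succ
  have hright : slopeR φ (t i.castSucc) = m :=
    (hasOutSlope_Ioi_of_affineOn hm ⟨le_rfl, hlt⟩).slopeR_eq
  have hi0 : 0 ≤ t i.castSucc := h0 ▸ hmono.monotone (Fin.zero_le _)
  have hm0 : m = slopeR φ 0 := by
    rcases hi0.eq_or_lt with h | hpos
    · rw [← hright, ← h]
    · have hleft : slopeL φ (t i.castSucc) = -slopeR φ 0 :=
        (hasOutSlope_Iio_of_affineOn (c := 0) (fun s hs => by rw [sub_zero]; exact ih s hs)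
          ⟨hpos, le_rfl⟩).slopeL_eq
      have hiL : t i.castSucc < L := hlast ▸ hlt.trans_le (hmono.monotone (Fin.le_last _))
      linarith [hcancel _ ⟨hpos, hiL⟩]
  rw [hm r ⟨hri, hr.2⟩, ih _ ⟨hi0, le_rfl⟩, hm0]
  ring

end PiecewiseLinear

section BrokenLines

variable {φ : ℝ → ℝ} {L p q r s t c : ℝ} {a : ℤ}

lemma isLocallyPL_max (p L : ℝ) : IsLocallyPL (fun s => max 0 (s - p)) L :=
  ⟨fun t _ => ⟨_, hasOutSlope_Ioi_max p t⟩, fun t _ => ⟨_, hasOutSlope_Iio_max p t⟩⟩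

/-- On `[0, L]`, the function `φ` starts with slope `a`, bends upwards by `1` at `p` and
downwards by `1` at `q`. A missing bend is encoded by placing it at `L`. -/
structure IsBrokenLine (φ : ℝ → ℝ) (L : ℝ) (a : ℤ) (p q : ℝ) : Prop where
  up_mem : p ∈ Icc 0 L
  down_mem : q ∈ Icc 0 L
  eq : ∀ r ∈ Icc 0 L, φ r = φ 0 + a * r + max 0 (r - p) - max 0 (r - q)

lemma IsBrokenLine.congr {ψ : ℝ → ℝ} (h : IsBrokenLine φ L a p q)
    (hψ : EqOn ψ φ (Icc 0 L)) : IsBrokenLine ψ L a p q :=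
  ⟨h.up_mem, h.down_mem, fun r hr => by
    rw [hψ hr, h.eq r hr, hψ ⟨le_rfl, hr.1.trans hr.2⟩]⟩

lemma isBrokenLine_const (c : ℝ) (hL : 0 ≤ L) : IsBrokenLine (fun _ => c) L 0 L L :=
  ⟨⟨hL, le_rfl⟩, ⟨hL, le_rfl⟩, fun r _ => by simp⟩

lemma PLInt.isBrokenLine (hφ : PLInt φ L) (hp : p ∈ Ioc 0 L) (hq : q ∈ Ioc 0 L)
    (hbend : ∀ r ∈ Ioo 0 L,
      slopeR φ r + slopeL φ r = (if r = p then 1 else 0) - if r = q then 1 else 0) :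
    IsBrokenLine φ L (slopeR φ 0) p q := by
  set ψ : ℝ → ℝ := fun r => φ r + -max 0 (r - p) + max 0 (r - q)
  have hloc := hφ.isLocallyPL
  have hψ : PLInt ψ L :=
    ((hloc.add (isLocallyPL_max p L).neg).add (isLocallyPL_max q L)).plInt (hp.1.le.trans hp.2)
  have hright : ∀ t ∈ Ico 0 L,
      slopeR ψ t = slopeR φ t - (if p ≤ t then 1 else 0) + if q ≤ t then 1 else 0 := by
    intro t ht
    obtain ⟨m, hm⟩ := hloc.1 t ht
    rw [((hm.add (hasOutSlope_Ioi_max p t).neg).add (hasOutSlope_Ioi_max q t)).slopeR_eq,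
      hm.slopeR_eq, sub_eq_add_neg]
  have hcancel : ∀ t ∈ Ioo 0 L, slopeR ψ t + slopeL ψ t = 0 := by
    intro t ht
    obtain ⟨m, hm⟩ := hloc.2 t ⟨ht.1, ht.2.le⟩
    have hb := hbend t ht
    rw [hm.slopeL_eq] at hb
    rw [hright t ⟨ht.1.le, ht.2⟩,
      ((hm.add (hasOutSlope_Iio_max p t).neg).add (hasOutSlope_Iio_max q t)).slopeL_eq]
    grind
  have hstart : slopeR ψ 0 = slopeR φ 0 := by
    rw [hright 0 ⟨le_rfl, hp.1.trans_le hp.2⟩, if_neg hp.1.not_ge, if_neg hq.1.not_ge]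
    ring
  refine ⟨Ioc_subset_Icc_self hp, Ioc_subset_Icc_self hq, fun r hr => ?_⟩
  have hlin := hψ.eq_linear_of_slopes_cancel hcancel r hr
  have hψ0 : ψ 0 = φ 0 := by
    simp only [ψ, max_eq_left (show (0 : ℝ) - p ≤ 0 by linarith [hp.1]),
      max_eq_left (show (0 : ℝ) - q ≤ 0 by linarith [hq.1]), neg_zero, add_zero]
  rw [hstart, hψ0] at hlin
  linarith

namespace IsBrokenLine

lemma hasOutSlope_Ioi (h : IsBrokenLine φ L a p q) (ht : t ∈ Ico 0 L) :
    HasOutSlope φ (Ioi t) t (a + (if p ≤ t then 1 else 0) - if q ≤ t then 1 else 0) := by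
  have hmodel := (((hasOutSlope_const (φ 0) _ t).add (hasOutSlope_Ioi_linear a t)).add
    (hasOutSlope_Ioi_max p t)).sub (hasOutSlope_Ioi_max q t)
  rw [zero_add] at hmodel
  refine hmodel.congr (h.eq t ⟨ht.1, ht.2.le⟩) ?_
  filter_upwards [Ioo_mem_nhdsGT ht.2] with r hr
  exact h.eq r ⟨ht.1.trans hr.1.le, hr.2.le⟩

lemma hasOutSlope_Iio (h : IsBrokenLine φ L a p q) (ht : t ∈ Ioc 0 L) :
    HasOutSlope φ (Iio t) t (-(a + (if p < t then 1 else 0) - if q < t then 1 else 0)) := by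
  have hmodel := (((hasOutSlope_const (φ 0) _ t).add (hasOutSlope_Iio_linear a t)).add
    (hasOutSlope_Iio_max p t)).sub (hasOutSlope_Iio_max q t)
  rw [show 0 + -a + (-if p < t then 1 else 0) - (-if q < t then 1 else 0)
    = -(a + (if p < t then 1 else 0) - if q < t then 1 else 0) by ring] at hmodel
  refine hmodel.congr (h.eq t ⟨ht.1.le, ht.2⟩) ?_
  filter_upwards [Ioo_mem_nhdsLT ht.1] with r hr
  exact h.eq r ⟨hr.1.le, hr.2.le.trans ht.2⟩

lemma slopeR_add_slopeL (h : IsBrokenLine φ L a p q) (ht : t ∈ Ioo 0 L) :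
    slopeR φ t + slopeL φ t = (if t = p then 1 else 0) - if t = q then 1 else 0 := by
  rw [(h.hasOutSlope_Ioi ⟨ht.1.le, ht.2⟩).slopeR_eq, (h.hasOutSlope_Iio ⟨ht.1, ht.2.le⟩).slopeL_eq]
  grind

lemma apply_end (h : IsBrokenLine φ L a p q) : φ L = φ 0 + a * L + (q - p) := by
  have hp := h.up_mem
  have hq := h.down_mem
  rw [h.eq L ⟨hp.1.trans hp.2, le_rfl⟩, max_eq_right (by linarith [hp.2]),
    max_eq_right (by linarith [hq.2])]
  ring

lemma slope_nonneg (h : IsBrokenLine φ L a p q) (hp : 0 < p) (hle : φ 0 ≤ φ L) : 0 ≤ a := by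
  by_contra! ha
  have ha' : (a : ℝ) ≤ -1 := by exact_mod_cast (by omega : a ≤ -1)
  nlinarith [h.apply_end, h.up_mem.1.trans h.up_mem.2, h.down_mem.2]

lemma one_le_slope_add (h : IsBrokenLine φ L a p q) (hp : 0 < p) (hlt : φ 0 < φ L) :
    1 ≤ a + if p < L then 1 else 0 := by
  have ha := h.slope_nonneg hp hlt.le
  rcases h.up_mem.2.lt_or_eq with hpL | rfl
  · rw [if_pos hpL]
    omega
  · rw [if_neg (lt_irrefl _), add_zero]
    by_contra! ha1
    have ha0 : a = 0 := by omega
    have hend := h.apply_end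
    rw [ha0, Int.cast_zero, zero_mul] at hend
    linarith [h.down_mem.2]

lemma monotoneOn (h : IsBrokenLine φ L a p q) (hp : 0 < p) (hle : φ 0 ≤ φ L) :
    MonotoneOn φ (Icc 0 L) := by
  intro r hr r' hr' hrr'
  rw [h.eq r hr, h.eq r' hr']
  rcases (h.slope_nonneg hp hle).eq_or_lt with rfl | ha
  · have hend := h.apply_end
    rw [Int.cast_zero, zero_mul] at hend
    have hpq : p ≤ q := by linarith
    push_cast
    grind
  · have ha' : (1 : ℝ) ≤ a := by exact_mod_cast ha
    have hslope : r' - r ≤ a * (r' - r) := le_mul_of_one_le_left (sub_nonneg.2 hrr') ha'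
    have hup : max 0 (r - p) ≤ max 0 (r' - p) := max_le_max le_rfl (by linarith)
    have hdown : max 0 (r' - q) ≤ max 0 (r - q) + (r' - r) := by grind
    linarith

/-- If `φ` already has slope `1` at `0`, its upward bend, encoded as lying at `L`, moves to `0`. -/
lemma ramp (h : IsBrokenLine φ L a p q) (ha : a + (if p < L then 1 else 0) = 1) :
    IsBrokenLine φ L 0 (if p < L then p else 0) q := by
  have hL : 0 ≤ L := h.up_mem.1.trans h.up_mem.2
  rcases h.up_mem.2.lt_or_eq with hpL | rfl
  · rw [if_pos hpL] at ha ⊢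
    obtain rfl : a = 0 := by omega
    exact h
  · rw [if_neg (lt_irrefl _)] at ha ⊢
    obtain rfl : a = 1 := by omega
    refine ⟨⟨le_rfl, hL⟩, h.down_mem, fun r hr => ?_⟩
    rw [h.eq r hr, max_eq_left (sub_nonpos.2 hr.2), sub_zero, max_eq_right hr.1]
    push_cast
    ring

lemma neg_reverse (h : IsBrokenLine φ L 0 s t) :
    IsBrokenLine (fun r => -φ (L - r)) L 0 (L - t) (L - s) := by
  have hs := h.up_mem
  have ht := h.down_mem
  refine ⟨⟨by linarith [ht.2], by linarith [ht.1]⟩, ⟨by linarith [hs.2], by linarith [hs.1]⟩,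
    fun r hr => ?_⟩
  rw [h.eq (L - r) ⟨by linarith [hr.2], by linarith [hr.1]⟩, sub_zero, h.apply_end]
  push_cast
  grind

section Ramp

variable (h : IsBrokenLine φ L 0 s t)
include h

lemma apply_sub_apply_zero : φ L - φ 0 = t - s := by
  have hend := h.apply_end
  rw [Int.cast_zero, zero_mul] at hend
  linarith

lemma apply_of_le (hst : s ≤ t) (hr : r ∈ Icc 0 s) : φ r = φ 0 := by
  rw [h.eq r ⟨hr.1, hr.2.trans h.up_mem.2⟩, max_eq_left (by linarith [hr.2]),
    max_eq_left (by linarith [hr.2])]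
  simp

lemma apply_of_mem_Icc (hr : r ∈ Icc s t) : φ r = φ 0 + (r - s) := by
  rw [h.eq r ⟨h.up_mem.1.trans hr.1, hr.2.trans h.down_mem.2⟩, max_eq_right (by linarith [hr.1]),
    max_eq_left (by linarith [hr.2])]
  simp

lemma apply_of_ge (hst : s ≤ t) (hr : r ∈ Icc t L) : φ r = φ L := by
  rw [h.eq r ⟨h.down_mem.1.trans hr.1, hr.2⟩, max_eq_right (by linarith [hr.1]),
    max_eq_right (by linarith [hr.1]), Int.cast_zero, zero_mul]
  linarith [h.apply_sub_apply_zero]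

lemma min_const (hc : c ∈ Ioc (φ 0) (φ L)) :
    IsBrokenLine (fun r => min (φ r) c) L 0 s (s + (c - φ 0)) := by
  have hrise := h.apply_sub_apply_zero
  refine ⟨h.up_mem, ⟨by linarith [h.up_mem.1, hc.1], by linarith [h.down_mem.2, hc.2]⟩,
    fun r hr => ?_⟩
  have hr' := h.eq r hr
  have hc1 := hc.1
  have hc2 := hc.2
  push_cast at hr' ⊢
  rw [hr', min_eq_left hc1.le]
  grind

end Ramp

end IsBrokenLine

end BrokenLines

section Reversal

variable {φ : ℝ → ℝ} {L t : ℝ}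

lemma IsLocallyPL.hasOutSlope_Ioi (h : IsLocallyPL φ L) (ht : t ∈ Ico 0 L) :
    HasOutSlope φ (Ioi t) t (slopeR φ t) :=
  (h.1 t ht).elim fun _ hm => hm.slopeR_eq.symm ▸ hm

lemma IsLocallyPL.hasOutSlope_Iio (h : IsLocallyPL φ L) (ht : t ∈ Ioc 0 L) :
    HasOutSlope φ (Iio t) t (slopeL φ t) :=
  (h.2 t ht).elim fun _ hm => hm.slopeL_eq.symm ▸ hm

lemma IsLocallyPL.hasOutSlope_Ioi_reverse (h : IsLocallyPL φ L) (ht : t ∈ Ico 0 L) :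
    HasOutSlope (fun r => φ (L - r)) (Ioi t) t (slopeL φ (L - t)) :=
  (h.hasOutSlope_Iio ⟨by linarith [ht.2], by linarith [ht.1]⟩).comp_const_sub
    fun _ hs => sub_lt_sub_left hs L

lemma IsLocallyPL.hasOutSlope_Iio_reverse (h : IsLocallyPL φ L) (ht : t ∈ Ioc 0 L) :
    HasOutSlope (fun r => φ (L - r)) (Iio t) t (slopeR φ (L - t)) :=
  (h.hasOutSlope_Ioi ⟨by linarith [ht.2], by linarith [ht.1]⟩).comp_const_sub
    fun _ hs => sub_lt_sub_left hs L

lemma IsLocallyPL.reverse (h : IsLocallyPL φ L) : IsLocallyPL (fun r => φ (L - r)) L :=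
  ⟨fun _ ht => ⟨_, h.hasOutSlope_Ioi_reverse ht⟩, fun _ ht => ⟨_, h.hasOutSlope_Iio_reverse ht⟩⟩

end Reversal

section DirectedEdges

variable {Γ : MetricGraphModel} {e : Γ.E} {p : Γ.Pt} {x : Γ.E × Bool} {r : ℝ}

/-- The directed edge `x` with the opposite orientation. -/
def dRev (Γ : MetricGraphModel) (x : Γ.E × Bool) : Γ.E × Bool := (x.1, !x.2)

/-- The parameter on the edge `x.1` of the point at distance `r` from the start of `x`. -/
def dPos (Γ : MetricGraphModel) (x : Γ.E × Bool) (r : ℝ) : ℝ :=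
  if x.2 then r else Γ.len x.1 - r

/-- The point of the edge `e` at distance `t` from its source; values of `t` outside
`[0, Γ.len e]` are sent to the nearest end. -/
noncomputable def edgePt (Γ : MetricGraphModel) (e : Γ.E) (t : ℝ) : Γ.Pt :=
  if h : 0 < t ∧ t < Γ.len e then Sum.inr ⟨e, t, h⟩
  else if t ≤ 0 then Sum.inl (Γ.src e) else Sum.inl (Γ.tgt e)

/-- The point at distance `r` from the start of the directed edge `x`. -/
noncomputable def dPt (Γ : MetricGraphModel) (x : Γ.E × Bool) (r : ℝ) : Γ.Pt :=
  Γ.edgePt x.1 (Γ.dPos x r)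

lemma dRev_fst (x : Γ.E × Bool) : (Γ.dRev x).1 = x.1 := rfl

lemma dRev_dRev (x : Γ.E × Bool) : Γ.dRev (Γ.dRev x) = x := by simp [dRev]

lemma dSrc_dRev (x : Γ.E × Bool) : Γ.dSrc (Γ.dRev x) = Γ.dTgt x := by
  rcases x with ⟨e, _ | _⟩ <;> rfl

lemma dTgt_dRev (x : Γ.E × Bool) : Γ.dTgt (Γ.dRev x) = Γ.dSrc x := by
  rcases x with ⟨e, _ | _⟩ <;> rfl

lemma dPos_dRev (x : Γ.E × Bool) (r : ℝ) : Γ.dPos (Γ.dRev x) r = Γ.dPos x (Γ.len x.1 - r) := by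
  rcases x with ⟨e, _ | _⟩ <;> simp [dPos, dRev]

lemma dPt_dRev (x : Γ.E × Bool) (r : ℝ) : Γ.dPt (Γ.dRev x) r = Γ.dPt x (Γ.len x.1 - r) := by
  rw [dPt, dPos_dRev]
  rfl

lemma dPos_mem_Icc (hr : r ∈ Icc 0 (Γ.len x.1)) : Γ.dPos x r ∈ Icc 0 (Γ.len x.1) := by
  rw [dPos]
  split_ifs
  exacts [hr, ⟨sub_nonneg.2 hr.2, sub_le_self _ hr.1⟩]

lemma dPos_mem_Ioo (hr : r ∈ Ioo 0 (Γ.len x.1)) : Γ.dPos x r ∈ Ioo 0 (Γ.len x.1) := by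
  rw [dPos]
  split_ifs
  exacts [hr, ⟨sub_pos.2 hr.2, sub_lt_self _ hr.1⟩]

lemma dPos_injective (x : Γ.E × Bool) : Function.Injective (Γ.dPos x) := by
  intro r r' h
  rw [dPos, dPos] at h
  split_ifs at h
  exacts [h, sub_right_injective h]

lemma edgePt_zero (e : Γ.E) : Γ.edgePt e 0 = Sum.inl (Γ.src e) := by simp [edgePt]

lemma edgePt_len (e : Γ.E) : Γ.edgePt e (Γ.len e) = Sum.inl (Γ.tgt e) := by
  simp [edgePt, (Γ.len_pos e).not_ge]

lemma edgePt_of_mem_Ioo {t : ℝ} (ht : t ∈ Ioo 0 (Γ.len e)) :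
    Γ.edgePt e t = Sum.inr ⟨e, t, ht⟩ := dif_pos ht

lemma dPt_zero (x : Γ.E × Bool) : Γ.dPt x 0 = Sum.inl (Γ.dSrc x) := by
  rcases x with ⟨e, _ | _⟩ <;> simp [dPt, dPos, dSrc, edgePt_zero, edgePt_len]

lemma dPt_len (x : Γ.E × Bool) : Γ.dPt x (Γ.len x.1) = Sum.inl (Γ.dTgt x) := by
  rcases x with ⟨e, _ | _⟩ <;> simp [dPt, dPos, dTgt, edgePt_zero, edgePt_len]

lemma dPt_of_mem_Ioo (hr : r ∈ Ioo 0 (Γ.len x.1)) :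
    Γ.dPt x r = Sum.inr ⟨x.1, Γ.dPos x r, dPos_mem_Ioo hr⟩ :=
  edgePt_of_mem_Ioo (dPos_mem_Ioo hr)

lemma liesOn_iff {t : ℝ} : LiesOn Γ e p t ↔ t ∈ Icc 0 (Γ.len e) ∧ p = Γ.edgePt e t := by
  have hpos := Γ.len_pos e
  constructor
  · rintro (⟨rfl, rfl⟩ | ⟨rfl, rfl⟩ | ⟨h, rfl⟩)
    · exact ⟨⟨le_rfl, hpos.le⟩, (edgePt_zero e).symm⟩
    · exact ⟨⟨hpos.le, le_rfl⟩, (edgePt_len e).symm⟩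
    · exact ⟨⟨h.1.le, h.2.le⟩, (edgePt_of_mem_Ioo h).symm⟩
  · rintro ⟨ht, rfl⟩
    rcases ht.1.eq_or_lt with rfl | h0
    · exact .inl ⟨edgePt_zero e, rfl⟩
    rcases ht.2.eq_or_lt with rfl | hL
    · exact .inr (.inl ⟨edgePt_len e, rfl⟩)
    · exact .inr (.inr ⟨⟨h0, hL⟩, edgePt_of_mem_Ioo ⟨h0, hL⟩⟩)

end DirectedEdges

section RationalFunctions

variable {Γ : MetricGraphModel} {x : Γ.E × Bool} {r : ℝ}

namespace RationalFunction

variable (f g : RationalFunction Γ)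

/-- The restriction of `f` to the directed edge `x`, as a function of the distance from its
start. -/
def along (f : RationalFunction Γ) (x : Γ.E × Bool) (r : ℝ) : ℝ :=
  f.eFun x.1 (Γ.dPos x r)

/-- The slope of `f` at the start of the directed edge `x`. -/
noncomputable def outSlope (f : RationalFunction Γ) (x : Γ.E × Bool) : ℤ :=
  slopeR (f.along x) 0

lemma along_zero (x : Γ.E × Bool) : f.along x 0 = f.vVal (Γ.dSrc x) := by
  rcases x with ⟨e, _ | _⟩ <;> simp [along, dPos, dSrc, f.srcVal, f.tgtVal]

lemma along_len (x : Γ.E × Bool) : f.along x (Γ.len x.1) = f.vVal (Γ.dTgt x) := by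
  rcases x with ⟨e, _ | _⟩ <;> simp [along, dPos, dTgt, f.srcVal, f.tgtVal]

lemma along_dRev (x : Γ.E × Bool) (r : ℝ) :
    f.along (Γ.dRev x) r = f.along x (Γ.len x.1 - r) := by
  rw [along, dPos_dRev]
  rfl

lemma ratEval_edgePt {e : Γ.E} (hr : r ∈ Icc 0 (Γ.len e)) :
    ratEval f (Γ.edgePt e r) = f.eFun e r := by
  rcases hr.1.eq_or_lt with rfl | h0
  · rw [edgePt_zero, ratEval, f.srcVal]
  rcases hr.2.eq_or_lt with rfl | hL
  · rw [edgePt_len, ratEval, f.tgtVal]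
  · rw [edgePt_of_mem_Ioo ⟨h0, hL⟩, ratEval]

lemma ratEval_dPt (hr : r ∈ Icc 0 (Γ.len x.1)) : ratEval f (Γ.dPt x r) = f.along x r :=
  f.ratEval_edgePt (dPos_mem_Icc hr)

lemma along_false (e : Γ.E) : f.along (e, false) = fun r => f.eFun e (Γ.len e - r) := rfl

lemma isLocallyPL_along (x : Γ.E × Bool) : IsLocallyPL (f.along x) (Γ.len x.1) := by
  rcases x with ⟨e, _ | _⟩
  exacts [(f.pl e).isLocallyPL.reverse, (f.pl e).isLocallyPL]

lemma plInt_along (x : Γ.E × Bool) : PLInt (f.along x) (Γ.len x.1) :=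
  (f.isLocallyPL_along x).plInt (Γ.len_pos _).le

lemma slopeL_along_len (x : Γ.E × Bool) :
    slopeL (f.along x) (Γ.len x.1) = f.outSlope (Γ.dRev x) := by
  have h := (f.isLocallyPL_along x).hasOutSlope_Ioi_reverse ⟨le_rfl, Γ.len_pos _⟩
  simp only [← along_dRev, sub_zero] at h
  exact h.slopeR_eq.symm

lemma ratDiv_dPt (hr : r ∈ Ioo 0 (Γ.len x.1)) :
    ratDiv f (Γ.dPt x r) = slopeR (f.along x) r + slopeL (f.along x) r := by
  rw [dPt_of_mem_Ioo hr]
  rcases x with ⟨e, _ | _⟩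
  · have hloc := (f.pl e).isLocallyPL
    rw [along_false, (hloc.hasOutSlope_Ioi_reverse ⟨hr.1.le, hr.2⟩).slopeR_eq,
      (hloc.hasOutSlope_Iio_reverse ⟨hr.1, hr.2.le⟩).slopeL_eq, add_comm]
    rfl
  · rfl

lemma ratDiv_inl (v : Γ.V) :
    ratDiv f (Sum.inl v) = ∑ x : Γ.E × Bool with Γ.dSrc x = v, f.outSlope x := by
  have hfalse : ∀ e, slopeL (f.eFun e) (Γ.len e) = f.outSlope (e, false) :=
    fun e => f.slopeL_along_len (e, true)
  rw [Finset.sum_filter, Fintype.sum_prod_type]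
  simp only [ratDiv, Fintype.sum_bool, hfalse]
  rfl

instance : Neg (RationalFunction Γ) where
  neg f :=
    { vVal := fun v => -f.vVal v
      eFun := fun e r => -f.eFun e r
      pl := fun e => (f.pl e).isLocallyPL.neg.plInt (Γ.len_pos e).le
      srcVal := fun e => congrArg Neg.neg (f.srcVal e)
      tgtVal := fun e => congrArg Neg.neg (f.tgtVal e) }

instance : Add (RationalFunction Γ) where
  add f g :=
    { vVal := fun v => f.vVal v + g.vVal v
      eFun := fun e r => f.eFun e r + g.eFun e r
      pl := fun e => ((f.pl e).isLocallyPL.add (g.pl e).isLocallyPL).plInt (Γ.len_pos e).le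
      srcVal := fun e => congrArg₂ _ (f.srcVal e) (g.srcVal e)
      tgtVal := fun e => congrArg₂ _ (f.tgtVal e) (g.tgtVal e) }

/-- The pointwise minimum of `f` and the constant `c`. -/
def truncate (f : RationalFunction Γ) (c : ℝ) : RationalFunction Γ where
  vVal v := min (f.vVal v) c
  eFun e r := min (f.eFun e r) c
  pl e := ((f.pl e).isLocallyPL.min_const c).plInt (Γ.len_pos e).le
  srcVal e := congrArg (min · c) (f.srcVal e)
  tgtVal e := congrArg (min · c) (f.tgtVal e)

lemma ratEval_neg (z : Γ.Pt) : ratEval (-f) z = -ratEval f z := by rcases z <;> rfl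

lemma ratEval_add (z : Γ.Pt) : ratEval (f + g) z = ratEval f z + ratEval g z := by
  rcases z <;> rfl

lemma outSlope_neg (x : Γ.E × Bool) : (-f).outSlope x = -f.outSlope x :=
  ((f.isLocallyPL_along x).hasOutSlope_Ioi ⟨le_rfl, Γ.len_pos _⟩).neg.slopeR_eq

lemma outSlope_add (x : Γ.E × Bool) : (f + g).outSlope x = f.outSlope x + g.outSlope x :=
  (((f.isLocallyPL_along x).hasOutSlope_Ioi ⟨le_rfl, Γ.len_pos _⟩).add
    ((g.isLocallyPL_along x).hasOutSlope_Ioi ⟨le_rfl, Γ.len_pos _⟩)).slopeR_eq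

lemma ratDiv_neg (p : Γ.Pt) : ratDiv (-f) p = -ratDiv f p := by
  rcases p with v | ⟨e, t, ht⟩
  · rw [ratDiv_inl, ratDiv_inl, ← Finset.sum_neg_distrib]
    exact Finset.sum_congr rfl fun x _ => f.outSlope_neg x
  · have hloc := (f.pl e).isLocallyPL
    have hR := (hloc.hasOutSlope_Ioi ⟨ht.1.le, ht.2⟩).neg.slopeR_eq
    have hL := (hloc.hasOutSlope_Iio ⟨ht.1, ht.2.le⟩).neg.slopeL_eq
    exact (congrArg₂ _ hR hL).trans (neg_add _ _).symm

lemma ratDiv_add (p : Γ.Pt) : ratDiv (f + g) p = ratDiv f p + ratDiv g p := by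
  rcases p with v | ⟨e, t, ht⟩
  · rw [ratDiv_inl, ratDiv_inl, ratDiv_inl, ← Finset.sum_add_distrib]
    exact Finset.sum_congr rfl fun x _ => f.outSlope_add g x
  · have hf := (f.pl e).isLocallyPL
    have hg := (g.pl e).isLocallyPL
    have hR := ((hf.hasOutSlope_Ioi ⟨ht.1.le, ht.2⟩).add
      (hg.hasOutSlope_Ioi ⟨ht.1.le, ht.2⟩)).slopeR_eq
    have hL := ((hf.hasOutSlope_Iio ⟨ht.1, ht.2.le⟩).add
      (hg.hasOutSlope_Iio ⟨ht.1, ht.2.le⟩)).slopeL_eq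
    exact (congrArg₂ _ hR hL).trans (add_add_add_comm _ _ _ _)

end RationalFunction

variable {D₁ D₂ D₃ : Divisor Γ}

lemma eq_add_ratDiv_neg {f : RationalFunction Γ} (h : ∀ p, D₁ p = D₂ p + ratDiv f p) (p : Γ.Pt) :
    D₂ p = D₁ p + ratDiv (-f) p := by
  rw [f.ratDiv_neg, h]
  ring

lemma LinEquiv.symm (h : LinEquiv Γ D₁ D₂) : LinEquiv Γ D₂ D₁ :=
  h.elim fun f hf => ⟨-f, eq_add_ratDiv_neg hf⟩

lemma LinEquiv.trans (h₁ : LinEquiv Γ D₁ D₂) (h₂ : LinEquiv Γ D₂ D₃) : LinEquiv Γ D₁ D₃ := by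
  obtain ⟨f, hf⟩ := h₁
  obtain ⟨g, hg⟩ := h₂
  refine ⟨g + f, fun p => ?_⟩
  rw [hf, hg, g.ratDiv_add]
  ring

end RationalFunctions

section AdmissibleDivisors

variable {Γ : MetricGraphModel} {D : Divisor Γ} {e : Γ.E} {x : Γ.E × Bool} {r p : ℝ}

lemma interiorOf_dPt (hr : r ∈ Ioo 0 (Γ.len x.1)) : interiorOf Γ x.1 (Γ.dPt x r) :=
  ⟨_, dPt_of_mem_Ioo hr⟩

lemma interiorOf.exists_dPt {z : Γ.Pt} (h : interiorOf Γ x.1 z) :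
    ∃ r ∈ Ioo 0 (Γ.len x.1), Γ.dPt x r = z := by
  obtain ⟨⟨t, ht⟩, rfl⟩ := h
  rcases x with ⟨e, _ | _⟩
  · exact ⟨Γ.len e - t, ⟨sub_pos.2 ht.2, sub_lt_self _ ht.1⟩, by
      simp only [dPt, dPos, Bool.false_eq_true, if_false, sub_sub_cancel, edgePt_of_mem_Ioo ht]⟩
  · exact ⟨t, ht, edgePt_of_mem_Ioo ht⟩

lemma dPt_injOn_Ioo (x : Γ.E × Bool) : InjOn (Γ.dPt x) (Ioo 0 (Γ.len x.1)) := by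
  intro r hr r' hr' h
  rw [dPt_of_mem_Ioo hr, dPt_of_mem_Ioo hr'] at h
  simp only [Sum.inr.injEq, Sigma.mk.injEq, heq_eq_eq, true_and] at h
  exact dPos_injective x (congrArg Subtype.val h)

lemma eq_of_interiorOf_dPt (h : interiorOf Γ e (Γ.dPt x r)) : e = x.1 := by
  obtain ⟨t, ht⟩ := h
  rw [dPt, edgePt] at ht
  split_ifs at ht
  exact (Sigma.mk.inj (Sum.inr.inj ht)).1.symm

lemma SameEdgeInterior.symm {z w : Γ.Pt} (h : SameEdgeInterior Γ z w) : SameEdgeInterior Γ w z :=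
  h.imp fun _ => And.symm

lemma not_sameEdgeInterior_inl (v : Γ.V) (z : Γ.Pt) : ¬SameEdgeInterior Γ (Sum.inl v) z := by
  rintro ⟨e, ⟨t, ht⟩, -⟩
  cases ht

lemma unitDiv_self (z : Γ.Pt) : unitDiv Γ z z = 1 := if_pos rfl

lemma unitDiv_nonneg (z w : Γ.Pt) : 0 ≤ unitDiv Γ z w := by
  unfold unitDiv
  split_ifs <;> norm_num

/-- The number of chips of `D` in the interior of `e`, for a divisor `D` with at most one chip
there. -/
noncomputable def edgeChips (D : Divisor Γ) (e : Γ.E) : ℤ :=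
  if ∃ z, interiorOf Γ e z ∧ D z ≠ 0 then 1 else 0

lemma edgeChips_nonneg (D : Divisor Γ) (e : Γ.E) : 0 ≤ edgeChips D e := by
  unfold edgeChips
  split_ifs <;> norm_num

lemma apply_eq_zero_of_edgeChips (hD : edgeChips D x.1 = 0) (hr : r ∈ Ioo 0 (Γ.len x.1)) :
    D (Γ.dPt x r) = 0 := by
  by_contra hne
  rw [edgeChips, if_pos ⟨_, interiorOf_dPt hr, hne⟩] at hD
  exact one_ne_zero hD

/-- In the interior of the directed edge `x`, the divisor `D` is a single chip at distance `p`
from the start of `x`, or it vanishes and `p = Γ.len x.1`. -/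
structure IsChipPos (D : Divisor Γ) (x : Γ.E × Bool) (p : ℝ) : Prop where
  mem : p ∈ Ioc 0 (Γ.len x.1)
  apply : ∀ r ∈ Ioo 0 (Γ.len x.1), D (Γ.dPt x r) = if r = p then 1 else 0

lemma IsChipPos.edgeChips_eq (h : IsChipPos D x p) :
    edgeChips D x.1 = if p < Γ.len x.1 then 1 else 0 := by
  refine if_congr ⟨fun ⟨z, hz, hDz⟩ => ?_, fun hp => ?_⟩ rfl rfl
  · obtain ⟨r, hr, rfl⟩ := hz.exists_dPt
    rw [h.apply r hr, ne_eq, ite_eq_right_iff, Classical.not_imp] at hDz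
    exact hDz.1 ▸ hr.2
  · have hp' : p ∈ Ioo 0 (Γ.len x.1) := ⟨h.mem.1, hp⟩
    exact ⟨_, interiorOf_dPt hp', by simp [h.apply p hp']⟩

/-- An effective divisor of degree `d` with at most one chip in the interior of each edge: the
shape of the admissible representatives. -/
structure IsAdmissible (D : Divisor Γ) (d : ℕ) : Prop where
  vertex_nonneg : ∀ v, 0 ≤ D (Sum.inl v)
  exists_isChipPos : ∀ x, ∃ p, IsChipPos D x p
  degree : ∑ v, D (Sum.inl v) + ∑ e, edgeChips D e = d

section SumOfPoints

variable {ι : Type*} [Fintype ι] {P : ι → Γ.Pt}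

lemma sum_unitDiv_nonneg (P : ι → Γ.Pt) (z : Γ.Pt) : 0 ≤ ∑ i, unitDiv Γ (P i) z :=
  Finset.sum_nonneg fun i _ => unitDiv_nonneg (P i) z

lemma sum_unitDiv_ne_zero_iff {z : Γ.Pt} : ∑ i, unitDiv Γ (P i) z ≠ 0 ↔ ∃ i, P i = z := by
  rw [ne_eq, Finset.sum_eq_zero_iff_of_nonneg fun i _ => unitDiv_nonneg (P i) z]
  simp [unitDiv, eq_comm (a := z)]

lemma sum_unitDiv_inl_add_sum_interiorOf (z : Γ.Pt) :
    ∑ v, unitDiv Γ z (Sum.inl v) + ∑ e, (if interiorOf Γ e z then 1 else 0) = 1 := by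
  rcases z with w | ⟨e, t⟩
  · simp [unitDiv, interiorOf]
  · have he (e') : interiorOf Γ e' (Sum.inr ⟨e, t⟩) ↔ e' = e :=
      ⟨fun ⟨_, h⟩ => (Sigma.mk.inj (Sum.inr.inj h)).1.symm, by rintro rfl; exact ⟨t, rfl⟩⟩
    simp [unitDiv, he]

variable (hP : Pairwise fun i j => ¬SameEdgeInterior Γ (P i) (P j))
include hP

lemma edgeChips_sum_unitDiv (e : Γ.E) :
    edgeChips (fun z => ∑ i, unitDiv Γ (P i) z) e = ∑ i, if interiorOf Γ e (P i) then 1 else 0 := by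
  by_cases h : ∃ i, interiorOf Γ e (P i)
  · obtain ⟨i, hi⟩ := h
    rw [edgeChips, if_pos ⟨P i, hi, sum_unitDiv_ne_zero_iff.2 ⟨i, rfl⟩⟩,
      Finset.sum_eq_single i (fun j _ hji => if_neg fun hj => hP hji ⟨e, hj, hi⟩)
        (fun h => absurd (Finset.mem_univ i) h), if_pos hi]
  · rw [edgeChips, if_neg, Finset.sum_eq_zero fun i _ => if_neg fun hi => h ⟨i, hi⟩]
    rintro ⟨z, hz, hne⟩
    obtain ⟨i, rfl⟩ := sum_unitDiv_ne_zero_iff.1 hne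
    exact h ⟨i, hz⟩

lemma exists_isChipPos_sum_unitDiv (x : Γ.E × Bool) :
    ∃ p, IsChipPos (fun z => ∑ i, unitDiv Γ (P i) z) x p := by
  by_cases h : ∃ i, interiorOf Γ x.1 (P i)
  · obtain ⟨i, hi⟩ := h
    obtain ⟨p, hp, hpi⟩ := hi.exists_dPt
    refine ⟨p, Ioo_subset_Ioc_self hp, fun r hr => ?_⟩
    rw [Finset.sum_eq_single i, ← hpi, unitDiv]
    · exact if_congr ((dPt_injOn_Ioo x).eq_iff hr hp) rfl rfl
    · exact fun j _ hji => if_neg fun hj : Γ.dPt x r = P j =>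
        hP hji ⟨x.1, hj ▸ interiorOf_dPt hr, hi⟩
    · exact fun h => absurd (Finset.mem_univ i) h
  · refine ⟨Γ.len x.1, ⟨Γ.len_pos _, le_rfl⟩, fun r hr => ?_⟩
    rw [if_neg hr.2.ne]
    by_contra hne
    obtain ⟨i, hi⟩ := sum_unitDiv_ne_zero_iff.1 hne
    exact h ⟨i, hi ▸ interiorOf_dPt hr⟩

lemma isAdmissible_sum_unitDiv :
    IsAdmissible (fun z => ∑ i, unitDiv Γ (P i) z) (Fintype.card ι) where
  vertex_nonneg v := sum_unitDiv_nonneg P _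
  exists_isChipPos := exists_isChipPos_sum_unitDiv hP
  degree := by
    simp only [edgeChips_sum_unitDiv hP]
    rw [Finset.sum_comm, Finset.sum_comm (s := (Finset.univ : Finset Γ.E)),
      ← Finset.sum_add_distrib]
    simp only [sum_unitDiv_inl_add_sum_interiorOf, Finset.sum_const, Finset.card_univ,
      nsmul_eq_mul, mul_one]

lemma admissibleRep_sum_unitDiv (hcard : Fintype.card ι = 3) {w : Γ.V} {i : ι}
    (hi : P i = Sum.inl w) (hD : LinEquiv Γ D fun z => ∑ i, unitDiv Γ (P i) z) :
    AdmissibleRep Γ D w fun z => ∑ i, unitDiv Γ (P i) z := by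
  have herase : (Finset.univ.erase i).card = 2 := by
    rw [Finset.card_erase_of_mem (Finset.mem_univ i), Finset.card_univ, hcard]
  obtain ⟨j, k, hjk, hrest⟩ := Finset.card_eq_two.1 herase
  refine ⟨hD, P j, P k, funext fun z => ?_, hP hjk⟩
  rw [← Finset.add_sum_erase _ _ (Finset.mem_univ i), hrest, Finset.sum_pair hjk, hi, add_assoc]

end SumOfPoints

lemma AdmissibleRep.isAdmissible {v : Γ.V} {Dv : Divisor Γ} (h : AdmissibleRep Γ D v Dv) :
    IsAdmissible Dv 3 := by
  obtain ⟨-, p, q, rfl, hpq⟩ := h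
  have hP : Pairwise fun i j : Fin 3 =>
      ¬SameEdgeInterior Γ (![Sum.inl v, p, q] i) (![Sum.inl v, p, q] j) := by
    have hqp : ¬SameEdgeInterior Γ q p := fun h => hpq h.symm
    have hp : ¬SameEdgeInterior Γ p (Sum.inl v) := fun h => not_sameEdgeInterior_inl v p h.symm
    have hq : ¬SameEdgeInterior Γ q (Sum.inl v) := fun h => not_sameEdgeInterior_inl v q h.symm
    intro i j hij
    fin_cases i <;> fin_cases j <;>
      first | exact absurd rfl hij | exact not_sameEdgeInterior_inl v _ | assumption
  simpa [Fin.sum_univ_three] using isAdmissible_sum_unitDiv hP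

end AdmissibleDivisors

section EdgeConnectivity

variable {Γ : MetricGraphModel} {S : Finset Γ.V} {x : Γ.E × Bool} {d : ℕ}

/-- The directed edges leaving the vertex set `S`. -/
noncomputable def edgeBoundary (S : Finset Γ.V) : Finset (Γ.E × Bool) :=
  Finset.univ.filter fun x => Γ.dSrc x ∈ S ∧ Γ.dTgt x ∉ S

lemma mem_edgeBoundary : x ∈ edgeBoundary S ↔ Γ.dSrc x ∈ S ∧ Γ.dTgt x ∉ S := by
  simp [edgeBoundary]

lemma dRev_mem_edgeBoundary_compl : Γ.dRev x ∈ edgeBoundary Sᶜ ↔ x ∈ edgeBoundary S := by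
  simp [mem_edgeBoundary, dSrc_dRev, dTgt_dRev, and_comm]

lemma card_edgeBoundary_compl (S : Finset Γ.V) :
    (edgeBoundary Sᶜ).card = (edgeBoundary S).card :=
  (Finset.card_nbij' (Γ.dRev) (Γ.dRev) (fun _ hx => dRev_mem_edgeBoundary_compl.2 hx)
    (fun x hx => dRev_mem_edgeBoundary_compl.1 ((dRev_dRev x).symm ▸ hx))
    (fun x _ => dRev_dRev x) (fun x _ => dRev_dRev x)).symm

lemma injOn_fst_edgeBoundary (S : Finset Γ.V) :
    InjOn (Prod.fst : Γ.E × Bool → Γ.E) (edgeBoundary S) := by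
  rintro ⟨e, b⟩ hx ⟨e', b'⟩ hy rfl
  rw [Finset.mem_coe, mem_edgeBoundary] at hx hy
  rcases b with _ | _ <;> rcases b' with _ | _
  exacts [rfl, absurd hx.1 hy.2, absurd hx.1 hy.2, rfl]

/-- No set of fewer than `d` edges disconnects the graph. -/
def EdgeConnected (Γ : MetricGraphModel) (d : ℕ) : Prop :=
  ∀ S : Finset Γ.V, S.Nonempty → Sᶜ.Nonempty → d ≤ (edgeBoundary S).card

lemma IsWalk.exists_mem_edgeBoundary {l : List (Γ.E × Bool)} :
    ∀ {u v : Γ.V}, Γ.IsWalk l u v → u ∈ S → v ∉ S → ∃ x ∈ l, x ∈ edgeBoundary S := by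
  induction l with
  | nil =>
    rintro u v rfl hu hv
    exact absurd hu hv
  | cons x l ih =>
    rintro u v ⟨rfl, hl⟩ hu hv
    by_cases hx : Γ.dTgt x ∈ S
    · exact (ih hl hx hv).imp fun y hy => ⟨List.mem_cons_of_mem x hy.1, hy.2⟩
    · exact ⟨x, List.mem_cons_self, mem_edgeBoundary.2 ⟨hu, hx⟩⟩

lemma ThreeEdgeConnected.edgeConnected (h : Γ.ThreeEdgeConnected) : Γ.EdgeConnected 3 := by
  rintro S ⟨u, hu⟩ ⟨v, hv⟩
  by_contra! hlt
  have hcard : ((edgeBoundary S).image Prod.fst).card ≤ 2 :=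
    Finset.card_image_le.trans (Nat.le_of_lt_succ hlt)
  obtain ⟨l, hl, havoid⟩ := h _ hcard u v
  obtain ⟨x, hxl, hxS⟩ := hl.exists_mem_edgeBoundary hu (Finset.mem_compl.1 hv)
  exact havoid x hxl (Finset.mem_image_of_mem _ hxS)

end EdgeConnectivity

section Transitions

variable {Γ : MetricGraphModel} {f : RationalFunction Γ} {D D₁ D₂ : Divisor Γ} {d : ℕ}
  {x : Γ.E × Bool} {p q : ℝ} {S : Finset Γ.V}

/-- The function `f` carries the admissible divisor `D₁` to the admissible divisor `D₂`: the chips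
move uphill. -/
structure IsTransition (f : RationalFunction Γ) (D₁ D₂ : Divisor Γ) (d : ℕ) : Prop where
  left : IsAdmissible D₁ d
  right : IsAdmissible D₂ d
  eq : ∀ z, D₁ z = D₂ z + ratDiv f z

namespace IsTransition

lemma neg (h : IsTransition f D₁ D₂ d) : IsTransition (-f) D₂ D₁ d :=
  ⟨h.right, h.left, eq_add_ratDiv_neg h.eq⟩

lemma isBrokenLine (h : IsTransition f D₁ D₂ d) (hp : IsChipPos D₁ x p) (hq : IsChipPos D₂ x q) :
    IsBrokenLine (f.along x) (Γ.len x.1) (f.outSlope x) p q :=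
  (f.plInt_along x).isBrokenLine hp.mem hq.mem fun r hr => by
    rw [← f.ratDiv_dPt hr, ← hp.apply r hr, ← hq.apply r hr, h.eq, add_sub_cancel_left]

lemma exists_isBrokenLine (h : IsTransition f D₁ D₂ d) (x : Γ.E × Bool) :
    ∃ a p q, IsBrokenLine (f.along x) (Γ.len x.1) a p q := by
  obtain ⟨p, hp⟩ := h.left.exists_isChipPos x
  obtain ⟨q, hq⟩ := h.right.exists_isChipPos x
  exact ⟨_, p, q, h.isBrokenLine hp hq⟩

lemma monotoneOn_along (h : IsTransition f D₁ D₂ d)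
    (hle : f.vVal (Γ.dSrc x) ≤ f.vVal (Γ.dTgt x)) :
    MonotoneOn (f.along x) (Icc 0 (Γ.len x.1)) := by
  obtain ⟨p, hp⟩ := h.left.exists_isChipPos x
  obtain ⟨q, hq⟩ := h.right.exists_isChipPos x
  refine (h.isBrokenLine hp hq).monotoneOn hp.mem.1 ?_
  rwa [f.along_zero, f.along_len]

lemma one_le_outSlope_add (h : IsTransition f D₁ D₂ d)
    (hlt : f.vVal (Γ.dSrc x) < f.vVal (Γ.dTgt x)) : 1 ≤ f.outSlope x + edgeChips D₁ x.1 := by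
  obtain ⟨p, hp⟩ := h.left.exists_isChipPos x
  obtain ⟨q, hq⟩ := h.right.exists_isChipPos x
  rw [hp.edgeChips_eq]
  refine (h.isBrokenLine hp hq).one_le_slope_add hp.mem.1 ?_
  rwa [f.along_zero, f.along_len]

lemma outSlope_add_outSlope_dRev (h : IsTransition f D₁ D₂ d) (x : Γ.E × Bool) :
    f.outSlope x + f.outSlope (Γ.dRev x) + edgeChips D₁ x.1 = edgeChips D₂ x.1 := by
  obtain ⟨p, hp⟩ := h.left.exists_isChipPos x
  obtain ⟨q, hq⟩ := h.right.exists_isChipPos x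
  rw [hp.edgeChips_eq, hq.edgeChips_eq, ← f.slopeL_along_len,
    ((h.isBrokenLine hp hq).hasOutSlope_Iio ⟨Γ.len_pos _, le_rfl⟩).slopeL_eq]
  ring

end IsTransition

section CutExcess

/-- The contribution of the edge `e` to `d - (edgeBoundary S).card`, for a transition of degree `d`
starting at `D`. -/
noncomputable def cutExcess (f : RationalFunction Γ) (D : Divisor Γ) (S : Finset Γ.V)
    (e : Γ.E) : ℤ :=
  ∑ b : Bool, ((if Γ.dSrc (e, b) ∈ S then f.outSlope (e, b) else 0) -
    if (e, b) ∈ edgeBoundary S then 1 else 0) + edgeChips D e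

lemma cutExcess_eq (f : RationalFunction Γ) (D : Divisor Γ) (S : Finset Γ.V) (x : Γ.E × Bool) :
    cutExcess f D S x.1 =
      (if Γ.dSrc x ∈ S then f.outSlope x else 0) - (if x ∈ edgeBoundary S then 1 else 0) +
      ((if Γ.dTgt x ∈ S then f.outSlope (Γ.dRev x) else 0) -
        if Γ.dRev x ∈ edgeBoundary S then 1 else 0) + edgeChips D x.1 := by
  rw [← dSrc_dRev, cutExcess, Fintype.sum_bool]
  rcases x with ⟨e, _ | _⟩
  · exact congrArg (· + edgeChips D e) (add_comm _ _)
  · rfl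

lemma cutExcess_of_mem_edgeBoundary (hx : x ∈ edgeBoundary S) :
    cutExcess f D S x.1 = f.outSlope x + edgeChips D x.1 - 1 := by
  have h := mem_edgeBoundary.1 hx
  rw [cutExcess_eq, if_pos h.1, if_pos hx, if_neg h.2,
    if_neg fun hrev => h.2 (dSrc_dRev x ▸ (mem_edgeBoundary.1 hrev).1)]
  ring

lemma cutExcess_of_notMem (hsrc : Γ.dSrc x ∉ S) (htgt : Γ.dTgt x ∉ S) :
    cutExcess f D S x.1 = edgeChips D x.1 := by
  simp [cutExcess_eq, mem_edgeBoundary, dSrc_dRev, hsrc, htgt]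

lemma IsTransition.cutExcess_of_mem (h : IsTransition f D₁ D₂ d) (hsrc : Γ.dSrc x ∈ S)
    (htgt : Γ.dTgt x ∈ S) : cutExcess f D₁ S x.1 = edgeChips D₂ x.1 := by
  simp [cutExcess_eq, mem_edgeBoundary, dTgt_dRev, hsrc, htgt, ← h.outSlope_add_outSlope_dRev]

lemma IsTransition.cutExcess_nonneg (h : IsTransition f D₁ D₂ d)
    (hlt : ∀ v ∈ S, ∀ w ∉ S, f.vVal v < f.vVal w) (e : Γ.E) : 0 ≤ cutExcess f D₁ S e := by
  have hcut (x : Γ.E × Bool) (hx : x ∈ edgeBoundary S) : 0 ≤ cutExcess f D₁ S x.1 := by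
    have hmem := mem_edgeBoundary.1 hx
    have hslope := h.one_le_outSlope_add (hlt _ hmem.1 _ hmem.2)
    rw [cutExcess_of_mem_edgeBoundary hx]
    omega
  by_cases hsrc : Γ.dSrc (e, true) ∈ S <;> by_cases htgt : Γ.dTgt (e, true) ∈ S
  · exact (edgeChips_nonneg D₂ e).trans_eq (h.cutExcess_of_mem hsrc htgt).symm
  · exact hcut (e, true) (mem_edgeBoundary.2 ⟨hsrc, htgt⟩)
  · exact hcut (e, false) (mem_edgeBoundary.2 ⟨htgt, hsrc⟩)
  · exact (edgeChips_nonneg D₁ e).trans_eq (cutExcess_of_notMem hsrc htgt).symm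

lemma sum_cutExcess (f : RationalFunction Γ) (D : Divisor Γ) (S : Finset Γ.V) :
    ∑ e, cutExcess f D S e =
      ∑ x with Γ.dSrc x ∈ S, f.outSlope x - (edgeBoundary S).card + ∑ e, edgeChips D e := by
  simp only [cutExcess, Finset.sum_add_distrib]
  rw [← Fintype.sum_prod_type (f := fun x : Γ.E × Bool =>
    (if Γ.dSrc x ∈ S then f.outSlope x else 0) - if x ∈ edgeBoundary S then (1 : ℤ) else 0),
    Finset.sum_sub_distrib, Finset.sum_filter]
  simp

lemma IsTransition.sum_cutExcess (h : IsTransition f D₁ D₂ d) (S : Finset Γ.V) :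
    ∑ v ∈ S, D₂ (Sum.inl v) + ∑ v ∈ Sᶜ, D₁ (Sum.inl v) + ∑ e, cutExcess f D₁ S e =
      d - (edgeBoundary S).card := by
  have hin : ∑ v ∈ S, D₁ (Sum.inl v) =
      ∑ v ∈ S, D₂ (Sum.inl v) + ∑ x with Γ.dSrc x ∈ S, f.outSlope x := by
    simp only [h.eq, f.ratDiv_inl, Finset.sum_add_distrib, Finset.sum_fiberwise_eq_sum_filter]
  rw [MetricGraphModel.sum_cutExcess, ← h.left.degree, ← Finset.sum_add_sum_compl S, hin]
  ring

end CutExcess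

section TightCuts

variable {s t : Γ.E × Bool → ℝ}

/-- The transition `f` moves exactly one chip across each of the `d` edges leaving `S`: along such
an edge `x`, the function `f` rises with slope one between the distances `s x` and `t x` and is
constant elsewhere. All chips of `D₁` start on the lower side and all chips of `D₂` end on the
upper side. -/
structure IsTightCut (f : RationalFunction Γ) (D₁ D₂ : Divisor Γ) (S : Finset Γ.V) (d : ℕ)
    (s t : Γ.E × Bool → ℝ) : Prop where
  card_edgeBoundary : (edgeBoundary S).card = d
  left_vertex : ∀ v ∉ S, D₁ (Sum.inl v) = 0
  right_vertex : ∀ v ∈ S, D₂ (Sum.inl v) = 0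
  left_edge : ∀ x, Γ.dSrc x ∉ S → Γ.dTgt x ∉ S → ∀ r ∈ Ioo 0 (Γ.len x.1), D₁ (Γ.dPt x r) = 0
  right_edge : ∀ x, Γ.dSrc x ∈ S → Γ.dTgt x ∈ S → ∀ r ∈ Ioo 0 (Γ.len x.1), D₂ (Γ.dPt x r) = 0
  ramp : ∀ x ∈ edgeBoundary S, IsBrokenLine (f.along x) (Γ.len x.1) 0 (s x) (t x)
  left_cut : ∀ x ∈ edgeBoundary S, ∀ r ∈ Ioo 0 (Γ.len x.1),
    D₁ (Γ.dPt x r) = if r = s x then 1 else 0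
  right_cut : ∀ x ∈ edgeBoundary S, ∀ r ∈ Ioo 0 (Γ.len x.1),
    D₂ (Γ.dPt x r) = if r = t x then 1 else 0

lemma IsTightCut.neg (h : IsTightCut f D₁ D₂ S d s t) :
    IsTightCut (-f) D₂ D₁ Sᶜ d (fun x => Γ.len x.1 - t (Γ.dRev x))
      (fun x => Γ.len x.1 - s (Γ.dRev x)) := by
  have hrev {x : Γ.E × Bool} (hx : x ∈ edgeBoundary Sᶜ) : Γ.dRev x ∈ edgeBoundary S := by
    rwa [← dRev_mem_edgeBoundary_compl, dRev_dRev]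
  have hchip {E : Divisor Γ} {c : Γ.E × Bool → ℝ}
      (hE : ∀ x ∈ edgeBoundary S, ∀ r ∈ Ioo 0 (Γ.len x.1),
        E (Γ.dPt x r) = if r = c x then 1 else 0)
      (x) (hx : x ∈ edgeBoundary Sᶜ) (r : ℝ) (hr : r ∈ Ioo 0 (Γ.len x.1)) :
      E (Γ.dPt x r) = if r = Γ.len x.1 - c (Γ.dRev x) then 1 else 0 := by
    have hE' := hE _ (hrev hx) (Γ.len x.1 - r) ⟨sub_pos.2 hr.2, sub_lt_self _ hr.1⟩
    rw [dPt_dRev, sub_sub_cancel] at hE'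
    exact hE'.trans (if_congr ⟨fun h => by rw [← h, sub_sub_cancel],
      fun h => by rw [h, sub_sub_cancel]⟩ rfl rfl)
  refine ⟨(card_edgeBoundary_compl S).trans h.card_edgeBoundary,
    fun v hv => h.right_vertex v (by simpa using hv),
    fun v hv => h.left_vertex v (by simpa using hv),
    fun x hs ht => h.right_edge x (by simpa using hs) (by simpa using ht),
    fun x hs ht => h.left_edge x (by simpa using hs) (by simpa using ht),
    fun x hx => ?_, hchip h.right_cut, hchip h.left_cut⟩
  have hramp := (h.ramp _ (hrev hx)).neg_reverse
  simp only [f.along_dRev, dRev_fst, sub_sub_cancel] at hramp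
  exact hramp

/-- Every chip is forced: each edge of the cut takes at least one of the `d` chips, and there are
at least `d` edges in the cut. -/
lemma IsTransition.exists_isTightCut (h : IsTransition f D₁ D₂ d) (hΓ : Γ.EdgeConnected d)
    (hS : S.Nonempty) (hSc : Sᶜ.Nonempty) (hlt : ∀ v ∈ S, ∀ w ∉ S, f.vVal v < f.vVal w) :
    ∃ s t, IsTightCut f D₁ D₂ S d s t := by
  have hcard := hΓ S hS hSc
  have hsum := h.sum_cutExcess S
  have hnn₁ (v) (_ : v ∈ Sᶜ) := h.left.vertex_nonneg v
  have hnn₂ (v) (_ : v ∈ S) := h.right.vertex_nonneg v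
  have hnn (e) (_ : e ∈ Finset.univ) := h.cutExcess_nonneg hlt e
  have hge₁ := Finset.sum_nonneg hnn₁
  have hge₂ := Finset.sum_nonneg hnn₂
  have hge := Finset.sum_nonneg hnn
  have hzero₁ := (Finset.sum_eq_zero_iff_of_nonneg hnn₁).1 (by omega)
  have hzero₂ := (Finset.sum_eq_zero_iff_of_nonneg hnn₂).1 (by omega)
  have hzero (x : Γ.E × Bool) : cutExcess f D₁ S x.1 = 0 :=
    (Finset.sum_eq_zero_iff_of_nonneg hnn).1 (by omega) x.1 (Finset.mem_univ _)
  choose p hp using h.left.exists_isChipPos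
  choose q hq using h.right.exists_isChipPos
  refine ⟨fun x => if p x < Γ.len x.1 then p x else 0, q, by omega,
    fun v hv => hzero₁ v (Finset.mem_compl.2 hv), hzero₂,
    fun x hs ht r => apply_eq_zero_of_edgeChips (cutExcess_of_notMem hs ht ▸ hzero x),
    fun x hs ht r => apply_eq_zero_of_edgeChips (h.cutExcess_of_mem hs ht ▸ hzero x),
    fun x hx => (h.isBrokenLine (hp x) (hq x)).ramp ?_, fun x _ r hr => ?_, fun x _ => (hq x).apply⟩
  · have hcut := hzero x
    rw [cutExcess_of_mem_edgeBoundary hx, (hp x).edgeChips_eq] at hcut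
    omega
  · have hr1 := hr.1
    have hr2 := hr.2
    rw [(hp x).apply r hr]
    grind

end TightCuts

end Transitions

section Extremes

variable {Γ : MetricGraphModel} {f : RationalFunction Γ} {D₁ D₂ : Divisor Γ} {d : ℕ}
  {x : Γ.E × Bool} {r c : ℝ} {z : Γ.Pt}

lemma eq_inl_or_eq_dPt (S : Finset Γ.V) (z : Γ.Pt) :
    (∃ v, z = Sum.inl v) ∨ ∃ x, ∃ r ∈ Ioo 0 (Γ.len x.1), z = Γ.dPt x r ∧
      (x ∈ edgeBoundary S ∨ (Γ.dSrc x ∈ S ∧ Γ.dTgt x ∈ S) ∨ (Γ.dSrc x ∉ S ∧ Γ.dTgt x ∉ S)) := by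
  rcases z with v | ⟨e, t, ht⟩
  · exact .inl ⟨v, rfl⟩
  have hpt : Sum.inr ⟨e, t, ht⟩ = Γ.dPt (e, true) t := (edgePt_of_mem_Ioo ht).symm
  right
  by_cases hrev : Γ.dRev (e, true) ∈ edgeBoundary S
  · exact ⟨Γ.dRev (e, true), Γ.len e - t, ⟨sub_pos.2 ht.2, sub_lt_self _ ht.1⟩,
      by rw [dPt_dRev, sub_sub_cancel, hpt], .inl hrev⟩
  · refine ⟨(e, true), t, ht, hpt, ?_⟩
    rw [mem_edgeBoundary, dSrc_dRev, dTgt_dRev] at hrev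
    rw [mem_edgeBoundary]
    tauto

namespace IsTransition

lemma along_mem_uIcc (h : IsTransition f D₁ D₂ d) (hr : r ∈ Icc 0 (Γ.len x.1)) :
    f.along x r ∈ uIcc (f.vVal (Γ.dSrc x)) (f.vVal (Γ.dTgt x)) := by
  have hrise (x) (r : ℝ) (hr : r ∈ Icc 0 (Γ.len x.1))
      (hle : f.vVal (Γ.dSrc x) ≤ f.vVal (Γ.dTgt x)) :
      f.along x r ∈ Icc (f.vVal (Γ.dSrc x)) (f.vVal (Γ.dTgt x)) := by
    have hmono := h.monotoneOn_along hle
    rw [← f.along_zero, ← f.along_len]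
    exact ⟨hmono ⟨le_rfl, (Γ.len_pos _).le⟩ hr hr.1, hmono hr ⟨(Γ.len_pos _).le, le_rfl⟩ hr.2⟩
  rcases le_total (f.vVal (Γ.dSrc x)) (f.vVal (Γ.dTgt x)) with hle | hle
  · exact Icc_subset_uIcc (hrise x r hr hle)
  · have hrev := hrise (Γ.dRev x) (Γ.len x.1 - r) ⟨sub_nonneg.2 hr.2, sub_le_self _ hr.1⟩
      (by rwa [dSrc_dRev, dTgt_dRev])
    rw [f.along_dRev, sub_sub_cancel, dSrc_dRev, dTgt_dRev] at hrev
    exact Icc_subset_uIcc' hrev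

lemma ratEval_le (h : IsTransition f D₁ D₂ d) (hc : ∀ v, f.vVal v ≤ c) (z : Γ.Pt) :
    ratEval f z ≤ c := by
  obtain ⟨v, rfl⟩ | ⟨x, r, hr, rfl, -⟩ := eq_inl_or_eq_dPt ∅ z
  · exact hc v
  · rw [f.ratEval_dPt (Ioo_subset_Icc_self hr)]
    exact (h.along_mem_uIcc (Ioo_subset_Icc_self hr)).2.trans (sup_le (hc _) (hc _))

lemma le_ratEval (h : IsTransition f D₁ D₂ d) (hc : ∀ v, c ≤ f.vVal v) (z : Γ.Pt) :
    c ≤ ratEval f z := by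
  have hneg := h.neg.ratEval_le (c := -c) (fun v => neg_le_neg (hc v)) z
  rw [f.ratEval_neg] at hneg
  exact neg_le_neg_iff.1 hneg

lemma support_left_subset_minSet (h : IsTransition f D₁ D₂ d) (hΓ : Γ.EdgeConnected d) :
    Function.support D₁ ⊆ minSet f := by
  intro z hz q
  refine h.le_ratEval (fun w => ?_) q
  by_cases htop : ∀ v, f.vVal v ≤ f.vVal w
  · exact h.ratEval_le htop z
  set S : Finset Γ.V := Finset.univ.filter fun v => f.vVal v ≤ f.vVal w with hS
  have hmem {v} : v ∈ S ↔ f.vVal v ≤ f.vVal w := by simp [hS]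
  obtain ⟨s, t, hcut⟩ := h.exists_isTightCut hΓ (S := S) ⟨w, hmem.2 le_rfl⟩
    ((not_forall.1 htop).imp fun v hv => Finset.mem_compl.2 (mt hmem.1 hv))
    fun v hv u hu => (hmem.1 hv).trans_lt (not_le.1 (mt hmem.2 hu))
  obtain ⟨v, rfl⟩ | ⟨x, r, hr, rfl, hx | ⟨hsrc, htgt⟩ | ⟨hsrc, htgt⟩⟩ := eq_inl_or_eq_dPt S z
  · exact hmem.1 (not_not.1 fun hv => hz (hcut.left_vertex v hv))
  · rw [Function.mem_support, hcut.left_cut x hx r hr, ne_eq, ite_eq_right_iff,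
      Classical.not_imp] at hz
    obtain ⟨hsrc, htgt⟩ := mem_edgeBoundary.1 hx
    have hrise := (hcut.ramp x hx).apply_sub_apply_zero
    rw [f.along_zero, f.along_len] at hrise
    rw [f.ratEval_dPt (Ioo_subset_Icc_self hr), (hcut.ramp x hx).apply_of_le
      (by linarith [hmem.1 hsrc, not_le.1 (mt hmem.2 htgt)]) ⟨hr.1.le, hz.1.le⟩, f.along_zero]
    exact hmem.1 hsrc
  · rw [f.ratEval_dPt (Ioo_subset_Icc_self hr)]
    exact (h.along_mem_uIcc (Ioo_subset_Icc_self hr)).2.trans (sup_le (hmem.1 hsrc) (hmem.1 htgt))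
  · exact absurd (hcut.left_edge x hsrc htgt r hr) hz

lemma support_right_subset_maxSet (h : IsTransition f D₁ D₂ d) (hΓ : Γ.EdgeConnected d) :
    Function.support D₂ ⊆ maxSet f := by
  intro z hz q
  have hneg := h.neg.support_left_subset_minSet hΓ hz q
  rw [f.ratEval_neg, f.ratEval_neg] at hneg
  exact neg_le_neg_iff.1 hneg

end IsTransition

end Extremes

section Slopes

variable {Γ : MetricGraphModel} {f : RationalFunction Γ} {D₁ D₂ : Divisor Γ} {d : ℕ}
  {x : Γ.E × Bool} {a : ℤ} {p q r : ℝ}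

namespace IsBrokenLine

variable (hb : IsBrokenLine (f.along x) (Γ.len x.1) a p q)
include hb

lemma ratDiv_dPt (hr : r ∈ Ioo 0 (Γ.len x.1)) :
    ratDiv f (Γ.dPt x r) = (if r = p then 1 else 0) - if r = q then 1 else 0 :=
  (f.ratDiv_dPt hr).trans (hb.slopeR_add_slopeL hr)

lemma outSlope : f.outSlope x = a + (if p ≤ 0 then 1 else 0) - if q ≤ 0 then 1 else 0 :=
  (hb.hasOutSlope_Ioi ⟨le_rfl, Γ.len_pos _⟩).slopeR_eq

lemma outSlope_dRev : f.outSlope (Γ.dRev x) =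
    -(a + (if p < Γ.len x.1 then 1 else 0) - if q < Γ.len x.1 then 1 else 0) := by
  rw [← f.slopeL_along_len, (hb.hasOutSlope_Iio ⟨Γ.len_pos _, le_rfl⟩).slopeL_eq]

end IsBrokenLine

lemma IsTransition.eq_of_forall_vVal_le (h : IsTransition f D₁ D₂ d)
    (hconst : ∀ v w, f.vVal v ≤ f.vVal w) : D₁ = D₂ := by
  have hline (x : Γ.E × Bool) : IsBrokenLine (f.along x) (Γ.len x.1) 0 (Γ.len x.1) (Γ.len x.1) := by
    refine (isBrokenLine_const (f.vVal (Γ.dSrc x)) (Γ.len_pos _).le).congr fun r hr => ?_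
    have hmem := h.along_mem_uIcc hr
    rwa [(hconst _ _).antisymm (hconst (Γ.dSrc x) (Γ.dTgt x)), uIcc_self] at hmem
  funext z
  rw [h.eq, add_eq_left]
  obtain ⟨v, rfl⟩ | ⟨x, r, hr, rfl, -⟩ := eq_inl_or_eq_dPt ∅ z
  · rw [f.ratDiv_inl]
    refine Finset.sum_eq_zero fun x _ => ?_
    rw [(hline x).outSlope, zero_add, sub_self]
  · rw [(hline x).ratDiv_dPt hr, sub_self]

end Slopes

section SumsOverCut

variable {Γ : MetricGraphModel} {S : Finset Γ.V} {k : Γ.E × Bool → ℝ} {x : Γ.E × Bool} {r : ℝ}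

lemma eq_of_dPt_eq_of_mem_edgeBoundary {y : Γ.E × Bool} {r' : ℝ} (hx : x ∈ edgeBoundary S)
    (hy : y ∈ edgeBoundary S) (hr : r ∈ Ioo 0 (Γ.len x.1)) (h : Γ.dPt y r' = Γ.dPt x r) : y = x :=
  injOn_fst_edgeBoundary S hy hx (eq_of_interiorOf_dPt (h ▸ interiorOf_dPt hr)).symm

lemma unitDiv_dPt_inl (hr : r ∈ Ioc 0 (Γ.len x.1)) (v : Γ.V) :
    unitDiv Γ (Γ.dPt x r) (Sum.inl v) = if r = Γ.len x.1 ∧ Γ.dTgt x = v then 1 else 0 := by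
  refine if_congr ?_ rfl rfl
  rcases hr.2.lt_or_eq with hlt | rfl
  · simp [dPt_of_mem_Ioo ⟨hr.1, hlt⟩, hlt.ne]
  · simp [dPt_len, eq_comm]

lemma sum_unitDiv_dPt_of_mem (hx : x ∈ edgeBoundary S) (hk : k x ∈ Icc 0 (Γ.len x.1))
    (hr : r ∈ Ioo 0 (Γ.len x.1)) :
    ∑ y ∈ edgeBoundary S, unitDiv Γ (Γ.dPt y (k y)) (Γ.dPt x r) = if r = k x then 1 else 0 := by
  have hother : ∀ y ∈ edgeBoundary S, y ≠ x → unitDiv Γ (Γ.dPt y (k y)) (Γ.dPt x r) = 0 :=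
    fun y hy hyx => if_neg fun h => hyx (eq_of_dPt_eq_of_mem_edgeBoundary hx hy hr h.symm)
  rw [Finset.sum_eq_single_of_mem x hx hother]
  refine if_congr ⟨fun h => ?_, fun h => h ▸ rfl⟩ rfl rfl
  have hint := interiorOf_dPt hr
  rw [h] at hint
  rcases hk.1.eq_or_lt with h0 | h0
  · rw [← h0, dPt_zero] at hint
    exact absurd hint fun ⟨_, h⟩ => Sum.inl_ne_inr h
  rcases hk.2.eq_or_lt with hL | hL
  · rw [hL, dPt_len] at hint
    exact absurd hint fun ⟨_, h⟩ => Sum.inl_ne_inr h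
  · exact dPt_injOn_Ioo x hr ⟨h0, hL⟩ h

lemma sum_unitDiv_dPt_of_notMem (hx : ∀ y ∈ edgeBoundary S, y.1 ≠ x.1)
    (hr : r ∈ Ioo 0 (Γ.len x.1)) :
    ∑ y ∈ edgeBoundary S, unitDiv Γ (Γ.dPt y (k y)) (Γ.dPt x r) = 0 :=
  Finset.sum_eq_zero fun y hy => if_neg fun h =>
    hx y hy (eq_of_interiorOf_dPt (h ▸ interiorOf_dPt hr)).symm

lemma ne_of_mem_edgeBoundary_of_iff (hx : Γ.dSrc x ∈ S ↔ Γ.dTgt x ∈ S) :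
    ∀ y ∈ edgeBoundary S, y.1 ≠ x.1 := by
  rintro ⟨e, b⟩ hy rfl
  obtain ⟨hsrc, htgt⟩ := mem_edgeBoundary.1 hy
  rcases x with ⟨e, _ | _⟩ <;> rcases b with _ | _
  exacts [htgt (hx.1 hsrc), htgt (hx.2 hsrc), htgt (hx.2 hsrc), htgt (hx.1 hsrc)]

end SumsOverCut

section Truncation

variable {Γ : MetricGraphModel} {f : RationalFunction Γ} {D₁ D₂ : Divisor Γ} {d : ℕ}
  {x : Γ.E × Bool} {r c : ℝ} {S : Finset Γ.V} {s t : Γ.E × Bool → ℝ}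

/-- The distance from the start of the directed edge `x` at which `f` reaches the level `c`, if `f`
is constant up to the distance `s x` and rises with slope one from there on. -/
def levelDist (f : RationalFunction Γ) (s : Γ.E × Bool → ℝ) (c : ℝ) (x : Γ.E × Bool) : ℝ :=
  s x + (c - f.vVal (Γ.dSrc x))

namespace IsTightCut

variable (hcut : IsTightCut f D₁ D₂ S d s t)
include hcut

lemma vVal_sub_vVal (hx : x ∈ edgeBoundary S) :
    f.vVal (Γ.dTgt x) - f.vVal (Γ.dSrc x) = t x - s x := by
  rw [← f.along_zero, ← f.along_len]
  exact (hcut.ramp x hx).apply_sub_apply_zero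

variable (hlow : ∀ v ∈ S, f.vVal v < c) (hhigh : ∀ v ∉ S, c ≤ f.vVal v)
include hlow hhigh

lemma levelDist_mem (hx : x ∈ edgeBoundary S) : levelDist f s c x ∈ Ioc (s x) (t x) := by
  have hrise := hcut.vVal_sub_vVal hx
  obtain ⟨hsrc, htgt⟩ := mem_edgeBoundary.1 hx
  refine ⟨lt_add_of_pos_right _ (sub_pos.2 (hlow _ hsrc)), ?_⟩
  rw [levelDist]
  linarith [hhigh _ htgt]

lemma levelDist_mem_Ioc_len (hx : x ∈ edgeBoundary S) :
    levelDist f s c x ∈ Ioc 0 (Γ.len x.1) :=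
  Ioc_subset_Ioc (hcut.ramp x hx).up_mem.1 (hcut.ramp x hx).down_mem.2
    (hcut.levelDist_mem hlow hhigh hx)

lemma isBrokenLine_truncate (hx : x ∈ edgeBoundary S) :
    IsBrokenLine ((f.truncate c).along x) (Γ.len x.1) 0 (s x) (levelDist f s c x) := by
  obtain ⟨hsrc, htgt⟩ := mem_edgeBoundary.1 hx
  have hmin := (hcut.ramp x hx).min_const (c := c)
    ⟨(f.along_zero x).trans_lt (hlow _ hsrc), (hhigh _ htgt).trans_eq (f.along_len x).symm⟩
  rwa [f.along_zero] at hmin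

end IsTightCut

lemma IsTransition.isBrokenLine_truncate_of_le (h : IsTransition f D₁ D₂ d)
    (hsrc : c ≤ f.vVal (Γ.dSrc x)) (htgt : c ≤ f.vVal (Γ.dTgt x)) :
    IsBrokenLine ((f.truncate c).along x) (Γ.len x.1) 0 (Γ.len x.1) (Γ.len x.1) :=
  (isBrokenLine_const c (Γ.len_pos _).le).congr fun _ hr =>
    min_eq_right ((le_inf hsrc htgt).trans (h.along_mem_uIcc hr).1)

lemma IsTransition.eqOn_along_truncate (h : IsTransition f D₁ D₂ d)
    (hsrc : f.vVal (Γ.dSrc x) ≤ c) (htgt : f.vVal (Γ.dTgt x) ≤ c) :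
    EqOn ((f.truncate c).along x) (f.along x) (Icc 0 (Γ.len x.1)) :=
  fun _ hr => min_eq_left ((h.along_mem_uIcc hr).2.trans (sup_le hsrc htgt))

lemma IsTransition.outSlope_truncate_of_le (h : IsTransition f D₁ D₂ d)
    (hsrc : f.vVal (Γ.dSrc x) ≤ c) (htgt : f.vVal (Γ.dTgt x) ≤ c) :
    (f.truncate c).outSlope x = f.outSlope x := by
  obtain ⟨a, p, q, hb⟩ := h.exists_isBrokenLine x
  rw [hb.outSlope, (hb.congr (h.eqOn_along_truncate hsrc htgt)).outSlope]

lemma IsTransition.ratDiv_truncate_dPt_of_le (h : IsTransition f D₁ D₂ d)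
    (hsrc : f.vVal (Γ.dSrc x) ≤ c) (htgt : f.vVal (Γ.dTgt x) ≤ c) (hr : r ∈ Ioo 0 (Γ.len x.1)) :
    ratDiv (f.truncate c) (Γ.dPt x r) = ratDiv f (Γ.dPt x r) := by
  obtain ⟨a, p, q, hb⟩ := h.exists_isBrokenLine x
  rw [hb.ratDiv_dPt hr, (hb.congr (h.eqOn_along_truncate hsrc htgt)).ratDiv_dPt hr]

lemma IsTransition.ratDiv_truncate_of_forall_le (h : IsTransition f D₁ D₂ d)
    (hc : ∀ v, f.vVal v ≤ c) (z : Γ.Pt) : ratDiv (f.truncate c) z = ratDiv f z := by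
  obtain ⟨v, rfl⟩ | ⟨x, r, hr, rfl, -⟩ := eq_inl_or_eq_dPt ∅ z
  · rw [f.ratDiv_inl, RationalFunction.ratDiv_inl]
    exact Finset.sum_congr rfl fun x _ => h.outSlope_truncate_of_le (hc _) (hc _)
  · exact h.ratDiv_truncate_dPt_of_le (hc _) (hc _) hr

namespace IsTransition

variable (h : IsTransition f D₁ D₂ d) (hcut : IsTightCut f D₁ D₂ S d s t)
  (hlow : ∀ v ∈ S, f.vVal v < c) (hhigh : ∀ v ∉ S, c ≤ f.vVal v)
include h hcut hlow hhigh

lemma outSlope_truncate_of_mem (hsrc : Γ.dSrc x ∈ S) :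
    (f.truncate c).outSlope x = f.outSlope x := by
  by_cases htgt : Γ.dTgt x ∈ S
  · exact h.outSlope_truncate_of_le (hlow _ hsrc).le (hlow _ htgt).le
  · have hx := mem_edgeBoundary.2 ⟨hsrc, htgt⟩
    have hlevel := hcut.levelDist_mem hlow hhigh hx
    have hs := (hcut.ramp x hx).up_mem.1
    rw [(hcut.isBrokenLine_truncate hlow hhigh hx).outSlope, (hcut.ramp x hx).outSlope,
      if_neg (hs.trans_lt hlevel.1).not_ge,
      if_neg (hs.trans_lt (hlevel.1.trans_le hlevel.2)).not_ge]

lemma outSlope_truncate_of_notMem (hsrc : Γ.dSrc x ∉ S) :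
    (f.truncate c).outSlope x = if Γ.dRev x ∈ edgeBoundary S then
      -unitDiv Γ (Γ.dPt (Γ.dRev x) (levelDist f s c (Γ.dRev x))) (Sum.inl (Γ.dSrc x)) else 0 := by
  by_cases hx : Γ.dRev x ∈ edgeBoundary S
  · have hlevel := hcut.levelDist_mem hlow hhigh hx
    have hmem := hcut.levelDist_mem_Ioc_len hlow hhigh hx
    have hrev := (hcut.isBrokenLine_truncate hlow hhigh hx).outSlope_dRev
    rw [dRev_dRev] at hrev
    rw [if_pos hx, unitDiv_dPt_inl hmem, dTgt_dRev, hrev, if_pos (hlevel.1.trans_le hmem.2)]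
    rcases hmem.2.lt_or_eq with hlt | heq
    · simp [hlt, hlt.ne]
    · simp [heq]
  · have htgt : Γ.dTgt x ∉ S := fun htgt => hx (mem_edgeBoundary.2
      ⟨(dSrc_dRev x).symm ▸ htgt, (dTgt_dRev x).symm ▸ hsrc⟩)
    rw [if_neg hx, (h.isBrokenLine_truncate_of_le (hhigh _ hsrc) (hhigh _ htgt)).outSlope,
      zero_add, sub_self]

lemma ratDiv_truncate_inl_of_notMem {v : Γ.V} (hv : v ∉ S) :
    ratDiv (f.truncate c) (Sum.inl v) =
      -∑ x ∈ edgeBoundary S, unitDiv Γ (Γ.dPt x (levelDist f s c x)) (Sum.inl v) := by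
  have hinv : Function.Involutive Γ.dRev := dRev_dRev
  rw [RationalFunction.ratDiv_inl, ← Finset.sum_neg_distrib, Finset.sum_filter,
    ← hinv.bijective.sum_comp, ← Finset.univ_inter (edgeBoundary S), ← Finset.sum_ite_mem]
  refine Finset.sum_congr rfl fun x _ => ?_
  rw [dSrc_dRev]
  split_ifs with hx hxS hxS
  · have hsrc : Γ.dSrc (Γ.dRev x) ∉ S := by rwa [dSrc_dRev, hx]
    rw [h.outSlope_truncate_of_notMem hcut hlow hhigh hsrc, dRev_dRev, if_pos hxS, dSrc_dRev, hx]
  · have hsrc : Γ.dSrc (Γ.dRev x) ∉ S := by rwa [dSrc_dRev, hx]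
    rw [h.outSlope_truncate_of_notMem hcut hlow hhigh hsrc, dRev_dRev, if_neg hxS]
  · rw [unitDiv_dPt_inl (hcut.levelDist_mem_Ioc_len hlow hhigh hxS), if_neg fun h => hx h.2,
      neg_zero]
  · rfl

lemma eq_sum_unitDiv_add_ratDiv_truncate (z : Γ.Pt) :
    D₁ z = ∑ x ∈ edgeBoundary S, unitDiv Γ (Γ.dPt x (levelDist f s c x)) z +
      ratDiv (f.truncate c) z := by
  obtain ⟨v, rfl⟩ | ⟨x, r, hr, rfl, hx | ⟨hsrc, htgt⟩ | ⟨hsrc, htgt⟩⟩ := eq_inl_or_eq_dPt S z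
  · by_cases hv : v ∈ S
    · have hzero : ∀ x ∈ edgeBoundary S,
          unitDiv Γ (Γ.dPt x (levelDist f s c x)) (Sum.inl v) = 0 := by
        intro x hx
        rw [unitDiv_dPt_inl (hcut.levelDist_mem_Ioc_len hlow hhigh hx), if_neg]
        rintro ⟨-, rfl⟩
        exact (mem_edgeBoundary.1 hx).2 hv
      rw [Finset.sum_eq_zero hzero, zero_add, h.eq, hcut.right_vertex v hv, zero_add,
        f.ratDiv_inl, RationalFunction.ratDiv_inl]
      exact Finset.sum_congr rfl fun x hx =>
        (h.outSlope_truncate_of_mem hcut hlow hhigh ((Finset.mem_filter.1 hx).2 ▸ hv)).symm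
    · rw [h.ratDiv_truncate_inl_of_notMem hcut hlow hhigh hv, hcut.left_vertex v hv, add_neg_cancel]
  · have hlevel := Ioc_subset_Icc_self (hcut.levelDist_mem_Ioc_len hlow hhigh hx)
    rw [sum_unitDiv_dPt_of_mem hx hlevel hr,
      (hcut.isBrokenLine_truncate hlow hhigh hx).ratDiv_dPt hr, hcut.left_cut x hx r hr,
      add_sub_cancel]
  · rw [sum_unitDiv_dPt_of_notMem (ne_of_mem_edgeBoundary_of_iff (iff_of_true hsrc htgt)) hr,
      h.ratDiv_truncate_dPt_of_le (hlow _ hsrc).le (hlow _ htgt).le hr, h.eq,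
      hcut.right_edge x hsrc htgt r hr]
  · rw [sum_unitDiv_dPt_of_notMem (ne_of_mem_edgeBoundary_of_iff (iff_of_false hsrc htgt)) hr,
      (h.isBrokenLine_truncate_of_le (hhigh _ hsrc) (hhigh _ htgt)).ratDiv_dPt hr,
      hcut.left_edge x hsrc htgt r hr, sub_self, add_zero]

end IsTransition

end Truncation

section Levels

variable {Γ : MetricGraphModel} {f g : RationalFunction Γ} {D D₁ D₂ E : Divisor Γ} {d : ℕ}
  {x y : Γ.E × Bool} {a b c : ℝ} {z z' : Γ.Pt} {S : Finset Γ.V} {s t : Γ.E × Bool → ℝ}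

lemma AdmissibleRep.exists_isTransition {v w : Γ.V} (h₁ : AdmissibleRep Γ D v D₁)
    (h₂ : AdmissibleRep Γ D w D₂) : ∃ f, IsTransition f D₁ D₂ 3 :=
  (h₁.1.symm.trans h₂.1).imp fun _ hf => ⟨h₁.isAdmissible, h₂.isAdmissible, hf⟩

lemma AdmissibleRep.apply_inl_ne_zero {v : Γ.V} (h : AdmissibleRep Γ D v D₁) :
    D₁ (Sum.inl v) ≠ 0 := by
  obtain ⟨-, p, q, rfl, -⟩ := h
  have hp := unitDiv_nonneg p (Sum.inl v)
  have hq := unitDiv_nonneg q (Sum.inl v)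
  change unitDiv Γ (Sum.inl v) (Sum.inl v) + unitDiv Γ p (Sum.inl v) + unitDiv Γ q (Sum.inl v) ≠ 0
  rw [unitDiv_self]
  omega

lemma IsTransition.add_neg (h : IsTransition f D₁ D₂ d) (hg : IsTransition g D₁ E d) :
    IsTransition (f + -g) E D₂ d := by
  refine ⟨hg.right, h.right, fun z => ?_⟩
  rw [f.ratDiv_add, ← add_assoc, ← h.eq]
  exact hg.neg.eq z

lemma IsTransition.exists_ratEval_eq_vVal (h : IsTransition f D₁ D₂ 3)
    (hΓ : Γ.EdgeConnected 3) (hD : LinEquiv Γ D D₁) (hz : SpecialPt Γ D z) :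
    ∃ w, ratEval f z = f.vVal w := by
  obtain ⟨v, rfl⟩ | ⟨w, E, hE, hz⟩ := hz
  · exact ⟨v, rfl⟩
  obtain ⟨g, hg⟩ := hD.symm.trans hE.1
  have hgE : IsTransition g D₁ E 3 := ⟨h.left, hE.isAdmissible, hg⟩
  have hmax := hgE.support_right_subset_maxSet hΓ
  have hmin := (h.add_neg hgE).support_left_subset_minSet hΓ
  have heq_g := (hmax hE.apply_inl_ne_zero z).antisymm (hmax hz (Sum.inl w))
  have heq := (hmin hz (Sum.inl w)).antisymm (hmin hE.apply_inl_ne_zero z)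
  rw [f.ratEval_add, f.ratEval_add, g.ratEval_neg, g.ratEval_neg, heq_g] at heq
  exact ⟨w, add_right_cancel heq⟩

lemma IsTransition.ratEval_lt_ratEval (h : IsTransition f D₁ D₂ d) (hΓ : Γ.EdgeConnected d)
    (hne : D₁ ≠ D₂) (hz : D₁ z ≠ 0) (hz' : D₂ z' ≠ 0) : ratEval f z < ratEval f z' := by
  by_contra! hle
  exact hne (h.eq_of_forall_vVal_le fun v w =>
    (h.support_right_subset_maxSet hΓ hz' (Sum.inl v)).trans
      (hle.trans (h.support_left_subset_minSet hΓ hz (Sum.inl w))))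

lemma IsTightCut.along_levelDist (hcut : IsTightCut f D₁ D₂ S d s t)
    (hlow : ∀ v ∈ S, f.vVal v < c) (hhigh : ∀ v ∉ S, c ≤ f.vVal v) (hx : x ∈ edgeBoundary S) :
    f.along x (levelDist f s c x) = c := by
  rw [(hcut.ramp x hx).apply_of_mem_Icc
    (Ioc_subset_Icc_self (hcut.levelDist_mem hlow hhigh hx)), f.along_zero, levelDist]
  ring

/-- The points of the cut at one level form a divisor equivalent to `D`; as soon as one of them is
a vertex, this divisor is an admissible representative. -/
lemma IsTransition.specialPt_of_levelDist_eq_len (h : IsTransition f D₁ D₂ 3)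
    (hcut : IsTightCut f D₁ D₂ S 3 s t) (hlow : ∀ v ∈ S, f.vVal v < c)
    (hhigh : ∀ v ∉ S, c ≤ f.vVal v) (hD : LinEquiv Γ D D₁) (hx : x ∈ edgeBoundary S)
    (hlen : levelDist f s c x = Γ.len x.1) (hy : y ∈ edgeBoundary S) :
    SpecialPt Γ D (Γ.dPt y (levelDist f s c y)) := by
  let P (u : edgeBoundary S) : Γ.Pt := Γ.dPt u.1 (levelDist f s c u.1)
  have hP : Pairwise fun u u' => ¬SameEdgeInterior Γ (P u) (P u') := by
    rintro u u' hne ⟨e, he, he'⟩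
    exact hne (Subtype.ext (injOn_fst_edgeBoundary S u.2 u'.2
      ((eq_of_interiorOf_dPt he).symm.trans (eq_of_interiorOf_dPt he'))))
  have hcard : Fintype.card (edgeBoundary S) = 3 :=
    (Fintype.card_coe _).trans hcut.card_edgeBoundary
  have hequiv : LinEquiv Γ D fun z => ∑ u, unitDiv Γ (P u) z := by
    refine hD.trans ⟨f.truncate c, fun z => ?_⟩
    rw [h.eq_sum_unitDiv_add_ratDiv_truncate hcut hlow hhigh z, ← Finset.sum_coe_sort]
  have hvertex : P ⟨x, hx⟩ = Sum.inl (Γ.dTgt x) := (congrArg (Γ.dPt x) hlen).trans (dPt_len x)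
  exact .inr ⟨_, _, admissibleRep_sum_unitDiv hP hcard hvertex hequiv,
    sum_unitDiv_ne_zero_iff.2 ⟨⟨y, hy⟩, rfl⟩⟩

lemma IsTransition.exists_isTightCut_lt (h : IsTransition f D₁ D₂ d) (hΓ : Γ.EdgeConnected d)
    {u v : Γ.V} (hu : f.vVal u < c) (hv : c ≤ f.vVal v) :
    ∃ s t, IsTightCut f D₁ D₂ {w | f.vVal w < c} d s t :=
  h.exists_isTightCut hΓ ⟨u, by simpa using hu⟩ ⟨v, by simpa using hv⟩ fun w hw w' hw' => by
    simp only [Finset.mem_filter, Finset.mem_univ, true_and, not_lt] at hw hw'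
    exact hw.trans_le hw'

lemma IsTransition.exists_vVal_dTgt_eq (h : IsTransition f D₁ D₂ d) (hΓ : Γ.EdgeConnected d)
    (hd : 0 < d) {u v w : Γ.V} (hu : f.vVal u < f.vVal v) (hw : f.vVal v < f.vVal w) :
    ∃ x, f.vVal (Γ.dSrc x) < f.vVal v ∧ f.vVal (Γ.dTgt x) = f.vVal v := by
  by_contra! hnone
  set S : Finset Γ.V := {w | f.vVal w < f.vVal v} with hS
  set S' : Finset Γ.V := {w | f.vVal w ≤ f.vVal v} with hS'
  have hmem {w} : w ∈ S ↔ f.vVal w < f.vVal v := by simp [hS]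
  have hmem' {w} : w ∈ S' ↔ f.vVal w ≤ f.vVal v := by simp [hS']
  obtain ⟨s, t, hcut⟩ := h.exists_isTightCut_lt hΓ hu le_rfl
  obtain ⟨s', t', hcut'⟩ := h.exists_isTightCut hΓ (S := S') ⟨v, hmem'.2 le_rfl⟩
    ⟨w, Finset.mem_compl.2 (mt hmem'.1 hw.not_ge)⟩
    fun y hy z hz => (hmem'.1 hy).trans_lt (not_le.1 (mt hmem'.2 hz))
  have hsub : edgeBoundary S ⊆ edgeBoundary S' := fun x hx => by
    rw [mem_edgeBoundary, hmem, hmem, not_lt] at hx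
    rw [mem_edgeBoundary, hmem', hmem', not_le]
    exact ⟨hx.1.le, hx.2.lt_of_ne' (hnone x hx.1)⟩
  have heq := Finset.eq_of_subset_of_card_le hsub
    (hcut'.card_edgeBoundary.trans hcut.card_edgeBoundary.symm).le
  have hT := hΓ {w | f.vVal w = f.vVal v} ⟨v, by simp⟩ ⟨u, by simpa using hu.ne⟩
  obtain ⟨x, hx⟩ := Finset.card_pos.1 (hd.trans_le hT)
  simp only [mem_edgeBoundary, Finset.mem_filter, Finset.mem_univ, true_and] at hx
  rcases lt_or_gt_of_ne hx.2 with hlt | hgt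
  · exact hnone (Γ.dRev x) (by rwa [dSrc_dRev]) (by rw [dTgt_dRev, hx.1])
  · have hxS : x ∈ edgeBoundary S :=
      heq ▸ mem_edgeBoundary.2 ⟨hmem'.2 hx.1.le, mt hmem'.1 hgt.not_ge⟩
    exact (hmem.1 (mem_edgeBoundary.1 hxS).1).ne hx.1

/-- A segment of the directed edge `x`, between the distances `a` and `b` from its start, that leads
from a support point of `D₁` to a support point of `D₂` and is an edge of the refinement `G_D`. -/
structure IsJoiningSegment (D D₁ D₂ : Divisor Γ) (x : Γ.E × Bool) (a b : ℝ) : Prop where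
  nonneg : 0 ≤ a
  lt : a < b
  le_len : b ≤ Γ.len x.1
  left : D₁ (Γ.dPt x a) ≠ 0
  right : D₂ (Γ.dPt x b) ≠ 0
  not_specialPt : ∀ r ∈ Ioo a b, ¬SpecialPt Γ D (Γ.dPt x r)

namespace IsJoiningSegment

variable (hseg : IsJoiningSegment D D₁ D₂ x a b)
include hseg

lemma left_mem : a ∈ Icc 0 (Γ.len x.1) := ⟨hseg.nonneg, hseg.lt.le.trans hseg.le_len⟩

lemma right_mem : b ∈ Icc 0 (Γ.len x.1) := ⟨hseg.nonneg.trans hseg.lt.le, hseg.le_len⟩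

lemma dRev : IsJoiningSegment D D₂ D₁ (Γ.dRev x) (Γ.len x.1 - b) (Γ.len x.1 - a) where
  nonneg := sub_nonneg.2 hseg.le_len
  lt := sub_lt_sub_left hseg.lt _
  le_len := sub_le_self _ hseg.nonneg
  left := by simpa only [dPt_dRev, sub_sub_cancel] using hseg.right
  right := by simpa only [dPt_dRev, sub_sub_cancel] using hseg.left
  not_specialPt r hr := by
    rw [dPt_dRev]
    exact hseg.not_specialPt _ ⟨by linarith [hr.2], by linarith [hr.1]⟩

variable (h : IsTransition f D₁ D₂ d) (hΓ : Γ.EdgeConnected d) (hne : D₁ ≠ D₂)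
include h hΓ hne

lemma along_lt_along : f.along x a < f.along x b := by
  rw [← f.ratEval_dPt hseg.left_mem, ← f.ratEval_dPt hseg.right_mem]
  exact h.ratEval_lt_ratEval hΓ hne hseg.left hseg.right

lemma vVal_le_vVal : f.vVal (Γ.dSrc x) ≤ f.vVal (Γ.dTgt x) := by
  by_contra! hlt
  have hmono := h.monotoneOn_along (x := Γ.dRev x) (by rw [dSrc_dRev, dTgt_dRev]; exact hlt.le)
  have hle := hmono hseg.dRev.left_mem hseg.dRev.right_mem hseg.dRev.lt.le
  rw [f.along_dRev, f.along_dRev, sub_sub_cancel, sub_sub_cancel] at hle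
  exact hle.not_gt (hseg.along_lt_along h hΓ hne)

lemma dSrc_mem_minSet : Sum.inl (Γ.dSrc x) ∈ minSet f := fun q => by
  have hle := h.monotoneOn_along (hseg.vVal_le_vVal h hΓ hne) ⟨le_rfl, (Γ.len_pos _).le⟩
    hseg.left_mem hseg.nonneg
  rw [f.along_zero, ← f.ratEval_dPt hseg.left_mem] at hle
  exact hle.trans (h.support_left_subset_minSet hΓ hseg.left q)

lemma dTgt_mem_maxSet : Sum.inl (Γ.dTgt x) ∈ maxSet f := fun q => by
  have hle := h.monotoneOn_along (hseg.vVal_le_vVal h hΓ hne) hseg.right_mem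
    ⟨(Γ.len_pos _).le, le_rfl⟩ hseg.le_len
  rw [f.along_len, ← f.ratEval_dPt hseg.right_mem] at hle
  exact (h.support_right_subset_maxSet hΓ hseg.right q).trans hle

end IsJoiningSegment

lemma IsTightCut.right_eq_len (hcut : IsTightCut f D₁ D₂ S d s t) (hx : x ∈ edgeBoundary S)
    (hst : s x < t x) (hmax : Function.support D₂ ⊆ maxSet f) {w : Γ.V}
    (htop : f.vVal (Γ.dTgt x) < f.vVal w) : t x = Γ.len x.1 := by
  have hs := (hcut.ramp x hx).up_mem
  have ht := (hcut.ramp x hx).down_mem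
  by_contra hne
  have hchip : D₂ (Γ.dPt x (t x)) ≠ 0 := by
    rw [hcut.right_cut x hx _ ⟨hs.1.trans_lt hst, ht.2.lt_of_ne hne⟩, if_pos rfl]
    exact one_ne_zero
  have hle := hmax hchip (Sum.inl w)
  rw [f.ratEval_dPt ht, (hcut.ramp x hx).apply_of_ge hst.le ⟨le_rfl, ht.2⟩, f.along_len] at hle
  exact htop.not_ge hle

/-- A vertex level strictly between the minimum and the maximum is attained at the end of an edge
coming from below; cutting there gives an admissible representative supported inside the segment. -/
lemma IsJoiningSegment.mem_minSet_or_mem_maxSet (hseg : IsJoiningSegment D D₁ D₂ x a b)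
    (h : IsTransition f D₁ D₂ 3) (hΓ : Γ.EdgeConnected 3) (hne : D₁ ≠ D₂)
    (hD : LinEquiv Γ D D₁) (v : Γ.V) : Sum.inl v ∈ minSet f ∨ Sum.inl v ∈ maxSet f := by
  by_contra! hv
  have hlow : f.vVal (Γ.dSrc x) < f.vVal v := by
    by_contra! hle
    exact hv.1 fun q => hle.trans (hseg.dSrc_mem_minSet h hΓ hne q)
  have hhigh : f.vVal v < f.vVal (Γ.dTgt x) := by
    by_contra! hle
    exact hv.2 fun q => (hseg.dTgt_mem_maxSet h hΓ hne q).trans hle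
  obtain ⟨s, t, hcut⟩ := h.exists_isTightCut_lt hΓ hlow le_rfl
  obtain ⟨y, hysrc, hytgt⟩ := h.exists_vVal_dTgt_eq hΓ three_pos hlow hhigh
  set S : Finset Γ.V := {w | f.vVal w < f.vVal v} with hS
  have hmem {w} : w ∈ S ↔ f.vVal w < f.vVal v := by simp [hS]
  have hbelow : ∀ w ∈ S, f.vVal w < f.vVal v := fun w => hmem.1
  have habove : ∀ w ∉ S, f.vVal v ≤ f.vVal w := fun w hw => not_lt.1 (mt hmem.2 hw)
  have hx : x ∈ edgeBoundary S :=
    mem_edgeBoundary.2 ⟨hmem.2 hlow, mt hmem.1 hhigh.not_gt⟩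
  have hy : y ∈ edgeBoundary S := mem_edgeBoundary.2 ⟨hmem.2 hysrc, mt hmem.1 hytgt.not_lt⟩
  have hval := hcut.vVal_sub_vVal hy
  have hlen : levelDist f s (f.vVal v) y = Γ.len y.1 := by
    rw [← hcut.right_eq_len hy (by linarith) (h.support_right_subset_maxSet hΓ)
      (hytgt.trans_lt hhigh), levelDist]
    linarith
  have hlevel := hcut.along_levelDist hbelow habove hx
  have hr := hcut.levelDist_mem_Ioc_len hbelow habove hx
  have hmono := h.monotoneOn_along (hlow.trans hhigh).le
  refine hseg.not_specialPt (levelDist f s (f.vVal v) x) ⟨?_, ?_⟩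
    (h.specialPt_of_levelDist_eq_len hcut hbelow habove hD hy hlen hx)
  · refine hmono.reflect_lt hseg.left_mem (Ioc_subset_Icc_self hr) ?_
    rw [hlevel, ← f.ratEval_dPt hseg.left_mem]
    exact (h.support_left_subset_minSet hΓ hseg.left (Sum.inl _)).trans_lt hlow
  · refine hmono.reflect_lt (Ioc_subset_Icc_self hr) hseg.right_mem ?_
    rw [hlevel, ← f.ratEval_dPt hseg.right_mem]
    exact hhigh.trans_le (h.support_right_subset_maxSet hΓ hseg.right (Sum.inl _))

end Levels

section TwoLevels

variable {Γ : MetricGraphModel} {f : RationalFunction Γ} {D D₁ D₂ : Divisor Γ} {d : ℕ} {e : Γ.E}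
  {x : Γ.E × Bool} {a b m M r u v : ℝ} {z : Γ.Pt} {S : Finset Γ.V} {s t : Γ.E × Bool → ℝ}

/-- A tight cut separating the vertices where `f` takes the value `m` from those where it takes the
larger value `M`, when there are no other values at vertices. -/
structure IsTwoLevelCut (f : RationalFunction Γ) (D₁ D₂ : Divisor Γ) (S : Finset Γ.V) (d : ℕ)
    (m M : ℝ) (s t : Γ.E × Bool → ℝ) : Prop extends IsTightCut f D₁ D₂ S d s t where
  lt : m < M
  low : ∀ v ∈ S, f.vVal v = m
  high : ∀ v ∉ S, f.vVal v = M

lemma IsTwoLevelCut.neg (hcut : IsTwoLevelCut f D₁ D₂ S d m M s t) :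
    IsTwoLevelCut (-f) D₂ D₁ Sᶜ d (-M) (-m) (fun x => Γ.len x.1 - t (Γ.dRev x))
      (fun x => Γ.len x.1 - s (Γ.dRev x)) where
  toIsTightCut := hcut.toIsTightCut.neg
  lt := neg_lt_neg hcut.lt
  low v hv := congrArg Neg.neg (hcut.high v (Finset.mem_compl.1 hv))
  high v hv := congrArg Neg.neg (hcut.low v (by simpa using hv))

lemma IsTwoLevelCut.vVal_le (hcut : IsTwoLevelCut f D₁ D₂ S d m M s t) (v : Γ.V) :
    f.vVal v ≤ M := by
  by_cases hv : v ∈ S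
  exacts [(hcut.low v hv).trans_le hcut.lt.le, (hcut.high v hv).le]

lemma IsTwoLevelCut.le_vVal (hcut : IsTwoLevelCut f D₁ D₂ S d m M s t) (v : Γ.V) :
    m ≤ f.vVal v :=
  neg_le_neg_iff.1 (hcut.neg.vVal_le v)

lemma IsTwoLevelCut.sub_eq (hcut : IsTwoLevelCut f D₁ D₂ S d m M s t) (hx : x ∈ edgeBoundary S) :
    t x - s x = M - m := by
  obtain ⟨hsrc, htgt⟩ := mem_edgeBoundary.1 hx
  rw [← hcut.vVal_sub_vVal hx, hcut.low _ hsrc, hcut.high _ htgt]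

lemma IsTwoLevelCut.lt_of_mem (hcut : IsTwoLevelCut f D₁ D₂ S d m M s t)
    (hx : x ∈ edgeBoundary S) : s x < t x :=
  sub_pos.1 (hcut.sub_eq hx ▸ sub_pos.2 hcut.lt)

lemma IsTransition.right_eq_sum (h : IsTransition f D₁ D₂ d)
    (hcut : IsTwoLevelCut f D₁ D₂ S d m M s t) (z : Γ.Pt) :
    D₂ z = ∑ x ∈ edgeBoundary S, unitDiv Γ (Γ.dPt x (t x)) z := by
  have hsum := h.eq_sum_unitDiv_add_ratDiv_truncate hcut.toIsTightCut
    (fun v hv => (hcut.low v hv).trans_lt hcut.lt) (fun v hv => (hcut.high v hv).ge) z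
  rw [h.ratDiv_truncate_of_forall_le hcut.vVal_le, h.eq] at hsum
  refine (add_right_cancel hsum).trans (Finset.sum_congr rfl fun x hx => ?_)
  rw [levelDist, hcut.low _ (mem_edgeBoundary.1 hx).1, ← hcut.sub_eq hx, add_sub_cancel]

lemma IsTransition.left_eq_sum (h : IsTransition f D₁ D₂ d)
    (hcut : IsTwoLevelCut f D₁ D₂ S d m M s t) (z : Γ.Pt) :
    D₁ z = ∑ x ∈ edgeBoundary S, unitDiv Γ (Γ.dPt x (s x)) z := by
  rw [h.neg.right_eq_sum hcut.neg z]
  refine Finset.sum_nbij' Γ.dRev Γ.dRev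
    (fun x hx => dRev_mem_edgeBoundary_compl.1 ((dRev_dRev x).symm ▸ hx))
    (fun x hx => dRev_mem_edgeBoundary_compl.2 hx)
    (fun x _ => dRev_dRev x) (fun x _ => dRev_dRev x) fun x _ => ?_
  rw [dPt_dRev]

lemma IsTransition.left_apply_ne_zero (h : IsTransition f D₁ D₂ d)
    (hcut : IsTwoLevelCut f D₁ D₂ S d m M s t) (hx : x ∈ edgeBoundary S) :
    D₁ (Γ.dPt x (s x)) ≠ 0 := by
  rw [h.left_eq_sum hcut, ← Finset.sum_coe_sort]
  exact sum_unitDiv_ne_zero_iff.2 ⟨⟨x, hx⟩, rfl⟩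

lemma IsTransition.right_apply_ne_zero (h : IsTransition f D₁ D₂ d)
    (hcut : IsTwoLevelCut f D₁ D₂ S d m M s t) (hx : x ∈ edgeBoundary S) :
    D₂ (Γ.dPt x (t x)) ≠ 0 := by
  rw [h.right_eq_sum hcut, ← Finset.sum_coe_sort]
  exact sum_unitDiv_ne_zero_iff.2 ⟨⟨x, hx⟩, rfl⟩

lemma IsTransition.isJoiningSegment (h : IsTransition f D₁ D₂ 3) (hΓ : Γ.EdgeConnected 3)
    (hcut : IsTwoLevelCut f D₁ D₂ S 3 m M s t) (hD : LinEquiv Γ D D₁) (hx : x ∈ edgeBoundary S) :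
    IsJoiningSegment D D₁ D₂ x (s x) (t x) where
  nonneg := (hcut.ramp x hx).up_mem.1
  lt := hcut.lt_of_mem hx
  le_len := (hcut.ramp x hx).down_mem.2
  left := h.left_apply_ne_zero hcut hx
  right := h.right_apply_ne_zero hcut hx
  not_specialPt r hr hspecial := by
    obtain ⟨w, hw⟩ := h.exists_ratEval_eq_vVal hΓ hD hspecial
    have hr' : r ∈ Icc 0 (Γ.len x.1) :=
      Icc_subset_Icc (hcut.ramp x hx).up_mem.1 (hcut.ramp x hx).down_mem.2 (Ioo_subset_Icc_self hr)
    rw [f.ratEval_dPt hr', (hcut.ramp x hx).apply_of_mem_Icc (Ioo_subset_Icc_self hr),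
      f.along_zero, hcut.low _ (mem_edgeBoundary.1 hx).1] at hw
    have hsub := hcut.sub_eq hx
    obtain ⟨hr₁, hr₂⟩ := hr
    by_cases hwS : w ∈ S
    · linarith [hcut.low w hwS]
    · linarith [hcut.high w hwS]

namespace IsJoiningSegment

variable (hseg : IsJoiningSegment D D₁ D₂ x a b)
include hseg

lemma vVal_lt_vVal (h : IsTransition f D₁ D₂ d) (hΓ : Γ.EdgeConnected d) (hne : D₁ ≠ D₂) :
    f.vVal (Γ.dSrc x) < f.vVal (Γ.dTgt x) :=
  (hseg.dSrc_mem_minSet h hΓ hne (Γ.dPt x a)).trans_lt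
    ((h.ratEval_lt_ratEval hΓ hne hseg.left hseg.right).trans_le
      (hseg.dTgt_mem_maxSet h hΓ hne (Γ.dPt x b)))

lemma exists_isTwoLevelCut (h : IsTransition f D₁ D₂ 3) (hΓ : Γ.EdgeConnected 3)
    (hne : D₁ ≠ D₂) (hD : LinEquiv Γ D D₁) :
    ∃ S m M s t, IsTwoLevelCut f D₁ D₂ S 3 m M s t := by
  have hlt := hseg.vVal_lt_vVal h hΓ hne
  have hmin := hseg.dSrc_mem_minSet h hΓ hne
  have hmax := hseg.dTgt_mem_maxSet h hΓ hne
  have hlevel := hseg.mem_minSet_or_mem_maxSet h hΓ hne hD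
  obtain ⟨s, t, hcut⟩ := h.exists_isTightCut_lt hΓ hlt le_rfl
  refine ⟨_, f.vVal (Γ.dSrc x), f.vVal (Γ.dTgt x), s, t, hcut, hlt, fun v hv => ?_, fun v hv => ?_⟩
  · have hv : f.vVal v < f.vVal (Γ.dTgt x) := by simpa using hv
    exact ((hlevel v).resolve_right fun hv' => hv.not_ge (hv' (Sum.inl _)) : _ ∈ minSet f)
      (Sum.inl _) |>.antisymm (hmin (Sum.inl v))
  · have hv : f.vVal (Γ.dTgt x) ≤ f.vVal v := by simpa using hv
    exact (hmax (Sum.inl v)).antisymm hv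

lemma mem_edgeBoundary (h : IsTransition f D₁ D₂ d) (hΓ : Γ.EdgeConnected d) (hne : D₁ ≠ D₂)
    (hcut : IsTwoLevelCut f D₁ D₂ S d m M s t) : x ∈ edgeBoundary S := by
  have hlt := hseg.vVal_lt_vVal h hΓ hne
  refine MetricGraphModel.mem_edgeBoundary.2 ⟨?_, fun hS => ?_⟩
  · by_contra hS
    exact hlt.not_ge ((hcut.vVal_le _).trans_eq (hcut.high _ hS).symm)
  · exact hlt.not_ge ((hcut.low _ hS).trans_le (hcut.le_vVal _))

lemma eq_left (h : IsTransition f D₁ D₂ d) (hΓ : Γ.EdgeConnected d) (hne : D₁ ≠ D₂)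
    {v : Γ.V} (hD₁ : AdmissibleRep Γ D v D₁) (hcut : IsTwoLevelCut f D₁ D₂ S d m M s t) :
    a = s x := by
  have hx := hseg.mem_edgeBoundary h hΓ hne hcut
  have hs := (hcut.ramp x hx).up_mem
  obtain ha | ha := hseg.nonneg.eq_or_lt'
  · by_contra! hsx
    have hchip := h.left_apply_ne_zero hcut hx
    have hval := h.ratEval_lt_ratEval hΓ hne hchip hseg.right
    rw [f.ratEval_dPt hs, f.ratEval_dPt hseg.right_mem] at hval
    have hsb := (h.monotoneOn_along (hseg.vVal_le_vVal h hΓ hne)).reflect_lt hs hseg.right_mem hval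
    exact hseg.not_specialPt _ ⟨(ha.trans_le hs.1).lt_of_ne hsx, hsb⟩ (.inr ⟨v, D₁, hD₁, hchip⟩)
  · by_contra! has
    exact hseg.left
      ((hcut.left_cut x hx a ⟨ha, hseg.lt.trans_le hseg.le_len⟩).trans (if_neg has))

lemma eq_right (h : IsTransition f D₁ D₂ d) (hΓ : Γ.EdgeConnected d) (hne : D₁ ≠ D₂)
    {v : Γ.V} (hD₂ : AdmissibleRep Γ D v D₂) (hcut : IsTwoLevelCut f D₁ D₂ S d m M s t) :
    b = t x := by
  have hb := hseg.dRev.eq_left h.neg hΓ hne.symm hD₂ hcut.neg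
  rw [dRev_dRev, dRev_fst] at hb
  exact sub_right_injective hb

end IsJoiningSegment

section Segments

/-- The segment of the directed edge `x` between the distances `a` and `b` from its start, in the
encoding of `ConnSeg`: an edge and two parameters measured from the source of that edge. -/
def dSeg (Γ : MetricGraphModel) (x : Γ.E × Bool) (a b : ℝ) : Γ.E × ℝ × ℝ :=
  if x.2 then (x.1, a, b) else (x.1, Γ.len x.1 - b, Γ.len x.1 - a)

lemma dSeg_fst (x : Γ.E × Bool) (a b : ℝ) : (Γ.dSeg x a b).1 = x.1 := by
  rcases x with ⟨e, _ | _⟩ <;> rfl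

lemma dSeg_sub (x : Γ.E × Bool) (a b : ℝ) : (Γ.dSeg x a b).2.2 - (Γ.dSeg x a b).2.1 = b - a := by
  rcases x with ⟨e, _ | _⟩
  exacts [sub_sub_sub_cancel_left _ _ _, rfl]

lemma dSeg_mem_Icc (ha : 0 ≤ a) (hb : b ≤ Γ.len x.1) :
    0 ≤ (Γ.dSeg x a b).2.1 ∧ (Γ.dSeg x a b).2.2 ≤ Γ.len (Γ.dSeg x a b).1 := by
  rcases x with ⟨e, _ | _⟩
  exacts [⟨sub_nonneg.2 hb, sub_le_self _ ha⟩, ⟨ha, hb⟩]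

lemma liesOn_dSeg_iff (ha : a ∈ Icc 0 (Γ.len x.1)) (hb : b ∈ Icc 0 (Γ.len x.1)) :
    (LiesOn Γ (Γ.dSeg x a b).1 z (Γ.dSeg x a b).2.1 ∨
      LiesOn Γ (Γ.dSeg x a b).1 z (Γ.dSeg x a b).2.2) ↔ z = Γ.dPt x a ∨ z = Γ.dPt x b := by
  have ha' := dPos_mem_Icc ha
  have hb' := dPos_mem_Icc hb
  rcases x with ⟨e, _ | _⟩
  · exact or_comm.trans (or_congr (liesOn_iff.trans (and_iff_right ha'))
      (liesOn_iff.trans (and_iff_right hb')))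
  · exact or_congr (liesOn_iff.trans (and_iff_right ha')) (liesOn_iff.trans (and_iff_right hb'))

lemma dPt_mem_segSet_dSeg (ha : 0 ≤ a) (hb : b ≤ Γ.len x.1) (hr : r ∈ Ioo a b) :
    Γ.dPt x r ∈ segSet Γ (Γ.dSeg x a b).1 (Γ.dSeg x a b).2.1 (Γ.dSeg x a b).2.2 := by
  have hr' := dPos_mem_Icc (x := x) ⟨ha.trans hr.1.le, hr.2.le.trans hb⟩
  rcases x with ⟨e, _ | _⟩
  · exact ⟨Γ.len e - r, sub_lt_sub_left hr.2 _, sub_lt_sub_left hr.1 _, liesOn_iff.2 ⟨hr', rfl⟩⟩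
  · exact ⟨r, hr.1, hr.2, liesOn_iff.2 ⟨hr', rfl⟩⟩

lemma connSeg_iff_or : ConnSeg Γ D D₁ D₂ e u v ↔
    IsJoiningSegment D D₁ D₂ (e, true) u v ∨ IsJoiningSegment D D₂ D₁ (e, true) u v := by
  constructor
  · rintro ⟨hlt, p, q, hp, hq, hsupp, hspecial⟩
    obtain ⟨hu, rfl⟩ := liesOn_iff.1 hp
    obtain ⟨hv, rfl⟩ := liesOn_iff.1 hq
    have hspecial' (r : ℝ) (hr : r ∈ Ioo u v) : ¬SpecialPt Γ D (Γ.dPt (e, true) r) :=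
      hspecial r hr.1 hr.2 _
        (liesOn_iff.2 ⟨⟨hu.1.trans hr.1.le, hr.2.le.trans hv.2⟩, rfl⟩)
    exact hsupp.imp (fun h => ⟨hu.1, hlt, hv.2, h.1, h.2, hspecial'⟩)
      fun h => ⟨hu.1, hlt, hv.2, h.1, h.2, hspecial'⟩
  · rintro (h | h)
    · exact ⟨h.lt, _, _, liesOn_iff.2 ⟨h.left_mem, rfl⟩, liesOn_iff.2 ⟨h.right_mem, rfl⟩,
        .inl ⟨h.left, h.right⟩,
        fun r hr hr' z hz => (liesOn_iff.1 hz).2 ▸ h.not_specialPt r ⟨hr, hr'⟩⟩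
    · exact ⟨h.lt, _, _, liesOn_iff.2 ⟨h.left_mem, rfl⟩, liesOn_iff.2 ⟨h.right_mem, rfl⟩,
        .inr ⟨h.left, h.right⟩,
        fun r hr hr' z hz => (liesOn_iff.1 hz).2 ▸ h.not_specialPt r ⟨hr, hr'⟩⟩

lemma connSeg_iff : ConnSeg Γ D D₁ D₂ e u v ↔
    ∃ x a b, IsJoiningSegment D D₁ D₂ x a b ∧ Γ.dSeg x a b = (e, u, v) := by
  rw [connSeg_iff_or]
  constructor
  · rintro (h | h)
    · exact ⟨_, _, _, h, rfl⟩
    · exact ⟨_, _, _, h.dRev, by simp [dSeg, dRev]⟩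
  · rintro ⟨⟨e', _ | _⟩, a, b, h, heq⟩ <;> obtain ⟨rfl, rfl, rfl⟩ := heq
    exacts [.inr h.dRev, .inl h]

end Segments

end TwoLevels

section Complements

variable {Γ : MetricGraphModel} {e e' : Γ.E} {p q z : Γ.Pt} {R : Set Γ.Pt} {r t u v m M : ℝ}

/-- The points `p` and `q` are joined by a path avoiding `R`. -/
def AvoidReach (R : Set Γ.Pt) (p q : Γ.Pt) : Prop :=
  Relation.ReflTransGen (fun a b => a ∉ R ∧ b ∉ R ∧ AvoidAdj Γ R a b) p q

lemma AvoidReach.symm (h : AvoidReach R p q) : AvoidReach R q p :=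
  Relation.ReflTransGen.mono
    (fun _ _ ⟨hb, ha, e, s, t, hst, hends, havoid⟩ => ⟨ha, hb, e, s, t, hst, hends.symm, havoid⟩)
    _ _ (Relation.ReflTransGen.swap _ _ h)

lemma AvoidAdj.ratEval_le (h : AvoidAdj Γ R p q) {f : RationalFunction Γ} (hmM : m < M)
    (hR : ∀ z, ratEval f z ∈ Ioo m M → z ∈ R) (hq : q ∉ R) (hpm : ratEval f p ≤ m) :
    ratEval f q ≤ m := by
  by_contra! hlt
  have hqM : M ≤ ratEval f q := not_lt.1 fun hqM => hq (hR q ⟨hlt, hqM⟩)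
  obtain ⟨c, hmc, hcM⟩ := exists_between hmM
  obtain ⟨e, s, t, hst, hends, havoid⟩ := h
  suffices hvalue : 0 ≤ s ∧ t ≤ Γ.len e ∧ c ∈ f.along (e, true) '' Ioo s t by
    obtain ⟨hs, ht, r, hr, rfl⟩ := hvalue
    have hr' : r ∈ Icc 0 (Γ.len e) := ⟨hs.trans hr.1.le, hr.2.le.trans ht⟩
    refine havoid r hr.1 hr.2 _ (liesOn_iff.2 ⟨hr', rfl⟩) (hR _ ?_)
    exact (f.ratEval_edgePt hr').symm ▸ ⟨hmc, hcM⟩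
  have hcont (hs : 0 ≤ s) (ht : t ≤ Γ.len e) : ContinuousOn (f.along (e, true)) (Icc s t) :=
    (f.isLocallyPL_along (e, true)).continuousOn.mono (Icc_subset_Icc hs ht)
  rcases hends with ⟨hp, hq⟩ | ⟨hq, hp⟩ <;> obtain ⟨hs, rfl⟩ := liesOn_iff.1 hp <;>
    obtain ⟨ht, rfl⟩ := liesOn_iff.1 hq <;> rw [f.ratEval_edgePt hs] at hpm <;>
    rw [f.ratEval_edgePt ht] at hqM
  · exact ⟨hs.1, ht.2, intermediate_value_Ioo hst (hcont hs.1 ht.2)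
      ⟨hpm.trans_lt hmc, hcM.trans_le hqM⟩⟩
  · exact ⟨ht.1, hs.2, intermediate_value_Ioo' hst (hcont ht.1 hs.2)
      ⟨hpm.trans_lt hmc, hcM.trans_le hqM⟩⟩

lemma AvoidReach.ratEval_le (h : AvoidReach R p q) {f : RationalFunction Γ} (hmM : m < M)
    (hR : ∀ z, ratEval f z ∈ Ioo m M → z ∈ R) (hpm : ratEval f p ≤ m) : ratEval f q ≤ m := by
  induction h with
  | refl => exact hpm
  | tail _ hstep ih => exact hstep.2.2.ratEval_le hmM hR hstep.2.1 ih

lemma not_complementConnected_of_forall_mem {f : RationalFunction Γ} (hmM : m < M)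
    (hR : ∀ z, ratEval f z ∈ Ioo m M → z ∈ R) (hp : p ∉ R) (hq : q ∉ R) (hpm : ratEval f p ≤ m)
    (hqM : M ≤ ratEval f q) : ¬ComplementConnected Γ R := fun hconn =>
  (hmM.trans_le hqM).not_ge (AvoidReach.ratEval_le (hconn p q hp hq) hmM hR hpm)

lemma edgePt_mem_segSet_iff (hu : 0 ≤ u) (hv : v ≤ Γ.len e') :
    Γ.edgePt e t ∈ segSet Γ e' u v ↔ e = e' ∧ t ∈ Ioo u v := by
  constructor
  · rintro ⟨r, hur, hrv, hr⟩
    have heq := (liesOn_iff.1 hr).2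
    rw [edgePt_of_mem_Ioo (e := e') ⟨hu.trans_lt hur, hrv.trans_le hv⟩, edgePt] at heq
    split_ifs at heq
    obtain ⟨rfl, heq⟩ := Sigma.mk.inj (Sum.inr_injective heq)
    obtain rfl : t = r := congrArg Subtype.val (eq_of_heq heq)
    exact ⟨rfl, hur, hrv⟩
  · rintro ⟨rfl, ht⟩
    exact ⟨t, ht.1, ht.2, liesOn_iff.2 ⟨⟨hu.trans ht.1.le, ht.2.le.trans hv⟩, rfl⟩⟩

lemma inl_notMem_segSet (w : Γ.V) (hu : 0 ≤ u) (hv : v ≤ Γ.len e) :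
    Sum.inl w ∉ segSet Γ e u v := by
  rintro ⟨r, hur, hrv, hr⟩
  have heq := (liesOn_iff.1 hr).2
  rw [edgePt_of_mem_Ioo ⟨hu.trans_lt hur, hrv.trans_le hv⟩] at heq
  exact Sum.inl_ne_inr heq

lemma avoidReach_edgePt (h : ∀ r ∈ Icc u v, Γ.edgePt e r ∉ R) (hu : 0 ≤ u) (huv : u ≤ v)
    (hv : v ≤ Γ.len e) : AvoidReach R (Γ.edgePt e u) (Γ.edgePt e v) :=
  .single ⟨h u ⟨le_rfl, huv⟩, h v ⟨huv, le_rfl⟩, e, u, v, huv,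
    .inl ⟨liesOn_iff.2 ⟨⟨hu, huv.trans hv⟩, rfl⟩, liesOn_iff.2 ⟨⟨hu.trans huv, hv⟩, rfl⟩⟩,
    fun r hr hr' _ hz => (liesOn_iff.1 hz).2 ▸ h r ⟨hr.le, hr'.le⟩⟩

lemma IsWalk.avoidReach {l : List (Γ.E × Bool)} (hl : ∀ x ∈ l, ∀ r, Γ.edgePt x.1 r ∉ R) {w w' : Γ.V}
    (hw : Γ.IsWalk l w w') : AvoidReach R (Sum.inl w) (Sum.inl w') := by
  induction l generalizing w with
  | nil => exact hw ▸ .refl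
  | cons x l ih =>
    obtain ⟨rfl, hw⟩ := hw
    refine .trans ?_ (ih (fun y hy => hl y (List.mem_cons_of_mem x hy)) hw)
    have hedge := avoidReach_edgePt (fun r _ => hl x List.mem_cons_self r) le_rfl
      (Γ.len_pos x.1).le le_rfl
    rw [edgePt_zero, edgePt_len] at hedge
    rcases x with ⟨e, _ | _⟩
    exacts [hedge.symm, hedge]

lemma exists_avoidReach_inl (hconv : ∀ e, (Γ.edgePt e ⁻¹' R).OrdConnected) (hz : z ∉ R) :
    ∃ w, AvoidReach R z (Sum.inl w) := by
  rcases z with w | ⟨e, t, ht⟩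
  · exact ⟨w, .refl⟩
  rw [← edgePt_of_mem_Ioo ht] at hz ⊢
  by_cases hbefore : ∀ r ∈ Icc 0 t, Γ.edgePt e r ∉ R
  · exact ⟨Γ.src e, edgePt_zero e ▸ (avoidReach_edgePt hbefore le_rfl ht.1.le ht.2.le).symm⟩
  · push Not at hbefore
    obtain ⟨r, hr, hrR⟩ := hbefore
    have hafter (r') (hr' : r' ∈ Icc t (Γ.len e)) : Γ.edgePt e r' ∉ R := fun hrR' =>
      hz ((hconv e).out hrR hrR' ⟨hr.2, hr'.1⟩)
    exact ⟨Γ.tgt e, edgePt_len e ▸ avoidReach_edgePt hafter ht.1.le ht.2.le le_rfl⟩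

lemma ThreeEdgeConnected.complementConnected (h : Γ.ThreeEdgeConnected) {F : Finset Γ.E}
    (hF : F.card ≤ 2) (hRF : ∀ e ∉ F, ∀ r, Γ.edgePt e r ∉ R)
    (hconv : ∀ e, (Γ.edgePt e ⁻¹' R).OrdConnected) : ComplementConnected Γ R := by
  intro p q hp hq
  obtain ⟨u, hu⟩ := exists_avoidReach_inl hconv hp
  obtain ⟨v, hv⟩ := exists_avoidReach_inl hconv hq
  obtain ⟨l, hl, havoid⟩ := h F hF u v
  exact (hu.trans (hl.avoidReach fun x hx => hRF _ (havoid x hx))).trans hv.symm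

lemma ThreeEdgeConnected.complementConnected_biUnion_segSet (h : Γ.ThreeEdgeConnected)
    {ι : Type*} {σ : ι → Γ.E × ℝ × ℝ} (hinj : Function.Injective fun i => (σ i).1)
    (hσ : ∀ i, 0 ≤ (σ i).2.1 ∧ (σ i).2.2 ≤ Γ.len (σ i).1) {J : Finset ι} (hJ : J.card ≤ 2) :
    ComplementConnected Γ (⋃ i ∈ J, segSet Γ (σ i).1 (σ i).2.1 (σ i).2.2) := by
  have hmem (e) (r : ℝ) : Γ.edgePt e r ∈ (⋃ i ∈ J, segSet Γ (σ i).1 (σ i).2.1 (σ i).2.2) ↔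
      ∃ i ∈ J, e = (σ i).1 ∧ r ∈ Ioo (σ i).2.1 (σ i).2.2 := by
    simp only [mem_iUnion₂, exists_prop, edgePt_mem_segSet_iff (hσ _).1 (hσ _).2]
  refine h.complementConnected (F := J.image fun i => (σ i).1) (Finset.card_image_le.trans hJ)
    (fun e he r hr => ?_) fun e => ⟨fun r hr r' hr' t ht => ?_⟩
  · obtain ⟨i, hi, rfl, -⟩ := (hmem e r).1 hr
    exact he (Finset.mem_image_of_mem _ hi)
  · obtain ⟨i, hi, rfl, hri⟩ := (hmem e r).1 hr
    obtain ⟨j, hj, hij, hrj⟩ := (hmem _ r').1 hr'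
    obtain rfl := hinj hij
    exact (hmem _ t).2 ⟨i, hi, rfl, ordConnected_Ioo.out hri hrj ht⟩

end Complements

section CutSegments

variable {Γ : MetricGraphModel} {f : RationalFunction Γ} {D D₁ D₂ : Divisor Γ} {d : ℕ}
  {x : Γ.E × Bool} {a b m M : ℝ} {v w : Γ.V} {z : Γ.Pt} {S : Finset Γ.V}
  {s t : Γ.E × Bool → ℝ} {R : Set Γ.Pt}

lemma IsTransition.not_complementConnected (h : IsTransition f D₁ D₂ d)
    (hcut : IsTwoLevelCut f D₁ D₂ S d m M s t) (hx : x ∈ edgeBoundary S)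
    (hR : ∀ y ∈ edgeBoundary S, ∀ r ∈ Ioo (s y) (t y), Γ.dPt y r ∈ R)
    (hvertex : ∀ v, Sum.inl v ∉ R) : ¬ComplementConnected Γ R := by
  obtain ⟨hsrc, htgt⟩ := mem_edgeBoundary.1 hx
  refine not_complementConnected_of_forall_mem hcut.lt (fun z hz => ?_) (hvertex (Γ.dSrc x))
    (hvertex (Γ.dTgt x)) (hcut.low _ hsrc).le (hcut.high _ htgt).ge
  obtain ⟨v, rfl⟩ | ⟨y, r, hr, rfl, hy | ⟨hs, ht⟩ | ⟨hs, ht⟩⟩ := eq_inl_or_eq_dPt S z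
  · by_cases hv : v ∈ S
    exacts [absurd (hcut.low v hv) hz.1.ne', absurd (hcut.high v hv) hz.2.ne]
  all_goals rw [f.ratEval_dPt (Ioo_subset_Icc_self hr)] at hz
  · have hramp := hcut.ramp y hy
    obtain ⟨hysrc, hytgt⟩ := mem_edgeBoundary.1 hy
    refine hR y hy r ⟨?_, ?_⟩ <;> by_contra! hle
    · have hval := hramp.apply_of_le (hcut.lt_of_mem hy).le ⟨hr.1.le, hle⟩
      rw [f.along_zero, hcut.low _ hysrc] at hval
      exact hz.1.ne' hval
    · have hval := hramp.apply_of_ge (hcut.lt_of_mem hy).le ⟨hle, hr.2.le⟩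
      rw [f.along_len, hcut.high _ hytgt] at hval
      exact hz.2.ne hval
  · have hval := h.along_mem_uIcc (Ioo_subset_Icc_self hr)
    rw [hcut.low _ hs, hcut.low _ ht, uIcc_self] at hval
    exact absurd hval hz.1.ne'
  · have hval := h.along_mem_uIcc (Ioo_subset_Icc_self hr)
    rw [hcut.high _ hs, hcut.high _ ht, uIcc_self] at hval
    exact absurd hval hz.2.ne

section CutSegment

variable {ι : Type*} (g : ι ≃ edgeBoundary S)

/-- The part of the `i`-th edge of the cut between the distances `s` and `t` from its start, where
`g` enumerates the cut. -/
def cutSegment (s t : Γ.E × Bool → ℝ) (i : ι) : Γ.E × ℝ × ℝ :=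
  Γ.dSeg (g i) (s (g i)) (t (g i))

lemma cutSegment_fst_injective : Function.Injective fun i => (cutSegment g s t i).1 :=
  fun i j hij => g.injective (Subtype.ext (injOn_fst_edgeBoundary S (g i).2 (g j).2 (by
    simpa only [cutSegment, dSeg_fst] using hij)))

lemma IsTightCut.cutSegment_mem_Icc (hcut : IsTightCut f D₁ D₂ S d s t) (i : ι) :
    0 ≤ (cutSegment g s t i).2.1 ∧
      (cutSegment g s t i).2.2 ≤ Γ.len (cutSegment g s t i).1 :=
  dSeg_mem_Icc (hcut.ramp _ (g i).2).up_mem.1 (hcut.ramp _ (g i).2).down_mem.2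

variable (hcut : IsTwoLevelCut f D₁ D₂ S d m M s t)
include hcut

lemma IsTwoLevelCut.cutSegment_sub (i : ι) :
    (cutSegment g s t i).2.2 - (cutSegment g s t i).2.1 = M - m :=
  (dSeg_sub _ _ _).trans (hcut.sub_eq (g i).2)

namespace IsTransition

lemma not_complementConnected_cutSegment [Nonempty ι] (h : IsTransition f D₁ D₂ d) :
    ¬ComplementConnected Γ (⋃ i, segSet Γ (cutSegment g s t i).1 (cutSegment g s t i).2.1
      (cutSegment g s t i).2.2) := by
  refine h.not_complementConnected hcut (g (Classical.arbitrary ι)).2 (fun y hy r hr => ?_)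
    fun v hv => ?_
  · obtain ⟨i, hi⟩ := g.surjective ⟨y, hy⟩
    obtain rfl : (g i : Γ.E × Bool) = y := congrArg Subtype.val hi
    have hramp := hcut.ramp _ hy
    exact mem_iUnion.2 ⟨i, dPt_mem_segSet_dSeg hramp.up_mem.1 hramp.down_mem.2 hr⟩
  · obtain ⟨i, hi⟩ := mem_iUnion.1 hv
    have hbounds := hcut.cutSegment_mem_Icc g i
    exact inl_notMem_segSet v hbounds.1 hbounds.2 hi

lemma exists_cutSegment_eq {e : Γ.E} (h : IsTransition f D₁ D₂ d) (hΓ : Γ.EdgeConnected d)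
    (hne : D₁ ≠ D₂) (h₁ : AdmissibleRep Γ D v D₁) (h₂ : AdmissibleRep Γ D w D₂)
    (hseg : ConnSeg Γ D D₁ D₂ e a b) : ∃ i, cutSegment g s t i = (e, a, b) := by
  obtain ⟨x, a', b', hjoin, heq⟩ := connSeg_iff.1 hseg
  refine ⟨g.symm ⟨x, hjoin.mem_edgeBoundary h hΓ hne hcut⟩, ?_⟩
  rw [cutSegment, Equiv.apply_symm_apply, ← hjoin.eq_left h hΓ hne h₁ hcut,
    ← hjoin.eq_right h hΓ hne h₂ hcut, heq]

lemma card_filter_liesOn_cutSegment [Fintype ι] (h : IsTransition f D₁ D₂ d)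
    (hΓ : Γ.EdgeConnected d) (hne : D₁ ≠ D₂) (hz : D₁ z ≠ 0) :
    ((Finset.univ.filter fun i : ι =>
      LiesOn Γ (cutSegment g s t i).1 z (cutSegment g s t i).2.1 ∨
        LiesOn Γ (cutSegment g s t i).1 z (cutSegment g s t i).2.2).card : ℤ) = D₁ z := by
  rw [h.left_eq_sum hcut, ← Finset.sum_coe_sort, ← g.sum_comp, Finset.natCast_card_filter]
  refine Finset.sum_congr rfl fun i _ => if_congr ?_ rfl rfl
  have hramp := hcut.ramp _ (g i).2
  refine (liesOn_dSeg_iff hramp.up_mem hramp.down_mem).trans (or_iff_left ?_)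
  rintro rfl
  exact (h.ratEval_lt_ratEval hΓ hne hz (h.right_apply_ne_zero hcut (g i).2)).false

end IsTransition

end CutSegment

end CutSegments

end MetricGraphModel

end

theorem consecutive_three_edge_cut_general
    (Γ : MetricGraphModel) (h3ec : Γ.ThreeEdgeConnected) (D : MetricGraphModel.Divisor Γ)
    (x y : Γ.V) (Dx Dy : MetricGraphModel.Divisor Γ)
    (hx : AdmissibleRep Γ D x Dx) (hy : AdmissibleRep Γ D y Dy)
    (hcons : Consecutive Γ D Dx Dy) :
    ∃ σ : Fin 3 → Γ.E × ℝ × ℝ, Function.Injective σ ∧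
      (∀ i, ConnSeg Γ D Dx Dy (σ i).1 (σ i).2.1 (σ i).2.2) ∧
      (∀ e s t, ConnSeg Γ D Dx Dy e s t → ∃ i, σ i = (e, s, t)) ∧
      (∀ i j, (σ i).2.2 - (σ i).2.1 = (σ j).2.2 - (σ j).2.1) ∧
      ¬ ComplementConnected Γ (⋃ i : Fin 3, segSet Γ (σ i).1 (σ i).2.1 (σ i).2.2) ∧
      (∀ J : Finset (Fin 3), J ≠ Finset.univ →
        ComplementConnected Γ (⋃ i ∈ J, segSet Γ (σ i).1 (σ i).2.1 (σ i).2.2)) ∧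
      (∀ z : Γ.Pt, Dx z ≠ 0 →
        ((Finset.univ.filter fun i : Fin 3 =>
            LiesOn Γ (σ i).1 z (σ i).2.1 ∨ LiesOn Γ (σ i).1 z (σ i).2.2).card : ℤ)
          = Dx z) := by
  obtain ⟨f, h⟩ := hx.exists_isTransition hy
  obtain ⟨hne, e, u, v, hconn⟩ := hcons
  obtain ⟨y₀, a, b, hseg, -⟩ := connSeg_iff.1 hconn
  have hΓ := h3ec.edgeConnected
  obtain ⟨S, m, M, s, t, hcut⟩ := hseg.exists_isTwoLevelCut h hΓ hne hx.1
  let g : Fin 3 ≃ edgeBoundary S := (Finset.equivFinOfCardEq hcut.card_edgeBoundary).symm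
  refine ⟨cutSegment g s t, (cutSegment_fst_injective g).of_comp,
    fun i => connSeg_iff.2 ⟨_, _, _, h.isJoiningSegment hΓ hcut hx.1 (g i).2, rfl⟩,
    fun _ _ _ => h.exists_cutSegment_eq g hcut hΓ hne hx hy,
    fun i j => (hcut.cutSegment_sub g i).trans (hcut.cutSegment_sub g j).symm,
    h.not_complementConnected_cutSegment g hcut, fun J hJ => ?_,
    fun z => h.card_filter_liesOn_cutSegment g hcut hΓ hne⟩
  exact h3ec.complementConnected_biUnion_segSet (cutSegment_fst_injective g)
    (hcut.cutSegment_mem_Icc g)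
    (Nat.le_of_lt_succ (Finset.card_lt_card (Finset.ssubset_univ_iff.2 hJ)))

/-- If `Dx` and `Dy` are consecutive admissible
representatives of `D ∈ W¹₃(Γ)` on a `3`-edge connected metric graph with more
than `3` vertices, then there are exactly three edges of the refinement `G_D`
joining `Supp Dx` and `Supp Dy`; they have the same length, they form a
`3`-edge cut, and the number of them incident to a point `z` of `Supp Dx`
equals the multiplicity `Dx z`. -/
theorem consecutive_three_edge_cut
    (Γ : MetricGraphModel) (hcan : Γ.IsCanonical) (h3ec : Γ.ThreeEdgeConnected)
    (hcard : 3 < Fintype.card Γ.V)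
    (D : MetricGraphModel.Divisor Γ) (hfin : MetricGraphModel.DivFinSupp D)
    (hdeg : MetricGraphModel.divDegree D = 3) (hrk : MetricGraphModel.RankGE Γ D 1)
    (x y : Γ.V) (Dx Dy : MetricGraphModel.Divisor Γ)
    (hx : AdmissibleRep Γ D x Dx) (hy : AdmissibleRep Γ D y Dy)
    (hcons : Consecutive Γ D Dx Dy) :
    ∃ σ : Fin 3 → Γ.E × ℝ × ℝ, Function.Injective σ ∧
      (∀ i, ConnSeg Γ D Dx Dy (σ i).1 (σ i).2.1 (σ i).2.2) ∧
      (∀ e s t, ConnSeg Γ D Dx Dy e s t → ∃ i, σ i = (e, s, t)) ∧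
      (∀ i j, (σ i).2.2 - (σ i).2.1 = (σ j).2.2 - (σ j).2.1) ∧
      ¬ ComplementConnected Γ (⋃ i : Fin 3, segSet Γ (σ i).1 (σ i).2.1 (σ i).2.2) ∧
      (∀ J : Finset (Fin 3), J ≠ Finset.univ →
        ComplementConnected Γ (⋃ i ∈ J, segSet Γ (σ i).1 (σ i).2.1 (σ i).2.2)) ∧
      (∀ z : Γ.Pt, Dx z ≠ 0 →
        ((Finset.univ.filter fun i : Fin 3 =>
            LiesOn Γ (σ i).1 z (σ i).2.1 ∨ LiesOn Γ (σ i).1 z (σ i).2.2).card : ℤ)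
          = Dx z) :=
  consecutive_three_edge_cut_general Γ h3ec D x y Dx Dy hx hy hcons
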